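/- Let n ≥ 3. An operator Y : 𝒫ⁿ → ℝⁿ is a Borel measurable (with respect to the topology of the Hausdorff metric) and SL(n) covariant valuation if and only if there exist real constants c₁, c₂ such that Y(Q) = c₁ m(Q) + c₂ m([0,Q]) for every Q ∈ 𝒫ⁿ, where [0,Q] denotes the convex hull of Q ∪ {0}. -/

import Mathlib

open MeasureTheory Filter Set Topology TopologicalSpace
open scoped ENNReal

noncomputable section

/-- `ℝⁿ` with the Euclidean norm. -/
abbrev En (n : ℕ) := EuclideanSpace ℝ (Fin n)

/-- `φ : ℝ → ℝ` is a Young function (viewed as a function on `[0,∞)`):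
`φ t = ∫₀ᵗ ψ(s) ds` for a non-decreasing, right-continuous `ψ` with `ψ 0 = 0`,
`ψ s > 0` for `s > 0` and `ψ s → ∞` as `s → ∞`. -/
def IsYoung (φ : ℝ → ℝ) : Prop :=
  ∃ ψ : ℝ → ℝ, (∀ s : ℝ, 0 ≤ s → 0 ≤ ψ s) ∧ MonotoneOn ψ (Set.Ici 0) ∧
    (∀ s : ℝ, 0 ≤ s → ContinuousWithinAt ψ (Set.Ici s) s) ∧
    ψ 0 = 0 ∧ (∀ s : ℝ, 0 < s → 0 < ψ s) ∧
    Tendsto ψ atTop atTop ∧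
    (∀ t : ℝ, 0 ≤ t → φ t = ∫ s in (0:ℝ)..t, ψ s)

/-- The complementary Young function `φ*(t) = sup_{s ≥ 0} (s t − φ s)`. -/
def conjYoung (φ : ℝ → ℝ) (t : ℝ) : ℝ :=
  sSup {y : ℝ | ∃ s : ℝ, 0 ≤ s ∧ y = s * t - φ s}

/-- The measure `μₙ(M) = ∫_M |x| dx`. -/
def mun {n : ℕ} (M : Set (En n)) : ℝ≥0∞ :=
  ∫⁻ x in M, ENNReal.ofReal ‖x‖

/-- Membership in the Orlicz space `L^φ(ℝⁿ, |x|dx)`: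
`h` is measurable and `∫ φ(δ|h(x)|)|x| dx < ∞` for every `δ > 0`. -/
def MemOrlicz {n : ℕ} (φ : ℝ → ℝ) (h : En n → ℝ) : Prop :=
  Measurable h ∧ ∀ δ : ℝ, 0 < δ →
    ∫⁻ x : En n, ENNReal.ofReal (φ (δ * |h x|)) * ENNReal.ofReal ‖x‖ < ⊤

/-- The Orlicz norm
`‖h‖_φ = sup { ∫ |h g| |x| dx : g measurable, ∫ φ*(|g|)|x| dx ≤ 1 }` (valued in `[0,∞]`). -/
def orliczNorm {n : ℕ} (φ : ℝ → ℝ) (h : En n → ℝ) : ℝ≥0∞ :=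
  ⨆ g ∈ {g : En n → ℝ | Measurable g ∧
      ∫⁻ x : En n, ENNReal.ofReal (conjYoung φ |g x|) * ENNReal.ofReal ‖x‖ ≤ 1},
    ∫⁻ x : En n, ENNReal.ofReal |h x * g x| * ENNReal.ofReal ‖x‖

/-- The moment vector `m(Q) = ∫_Q x dx` of a set `Q ⊆ ℝⁿ`. -/
def momentSet {n : ℕ} (Q : Set (En n)) : En n := ∫ x in Q, x

/-- The action of an `n × n` matrix on `ℝⁿ`. -/
def matVec {n : ℕ} (ϑ : Matrix (Fin n) (Fin n) ℝ) (x : En n) : En n :=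
  Matrix.toEuclideanLin ϑ x

/-- A compact convex polytope: the convex hull of a nonempty finite set. -/
def IsPolytope {n : ℕ} (Q : Set (En n)) : Prop :=
  ∃ S : Finset (En n), S.Nonempty ∧ Q = convexHull ℝ (S : Set (En n))

/-- The space of polytopes, topologized via the Hausdorff metric on nonempty
compact subsets of `ℝⁿ`. -/
abbrev PolySp (n : ℕ) := {K : NonemptyCompacts (En n) // IsPolytope (K : Set (En n))}

/-- `Y` is a valuation on polytopes. -/
def IsPolyValuation {n : ℕ} (Y : Set (En n) → En n) : Prop :=
  ∀ Q₁ Q₂ : Set (En n), IsPolytope Q₁ → IsPolytope Q₂ → IsPolytope (Q₁ ∪ Q₂) →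
    IsPolytope (Q₁ ∩ Q₂) → Y Q₁ + Y Q₂ = Y (Q₁ ∪ Q₂) + Y (Q₁ ∩ Q₂)

/-- `Y` is `SL(n)` covariant on polytopes: `Y(ϑ Q) = ϑ (Y Q)` for `det ϑ = 1`. -/
def IsPolySLCovariant {n : ℕ} (Y : Set (En n) → En n) : Prop :=
  ∀ Q : Set (En n), IsPolytope Q → ∀ ϑ : Matrix (Fin n) (Fin n) ℝ, ϑ.det = 1 →
    Y (matVec ϑ '' Q) = matVec ϑ (Y Q)

/-- `Ψ` is a valuation on `L^φ(ℝⁿ, |x|dx)`. -/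
def IsOrliczValuation {n : ℕ} (φ : ℝ → ℝ) (Ψ : (En n → ℝ) → En n) : Prop :=
  ∀ h₁ h₂ : En n → ℝ, MemOrlicz φ h₁ → MemOrlicz φ h₂ →
    Ψ (fun x => max (h₁ x) (h₂ x)) + Ψ (fun x => min (h₁ x) (h₂ x)) = Ψ h₁ + Ψ h₂

/-- `Ψ` is `SL(n)` covariant: `Ψ(h ∘ ϑ⁻¹) = ϑ (Ψ h)` for `det ϑ = 1`. -/
def IsOrliczSLCovariant {n : ℕ} (φ : ℝ → ℝ) (Ψ : (En n → ℝ) → En n) : Prop :=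
  ∀ h : En n → ℝ, MemOrlicz φ h → ∀ ϑ : Matrix (Fin n) (Fin n) ℝ, ϑ.det = 1 →
    Ψ (fun x => h (matVec ϑ⁻¹ x)) = matVec ϑ (Ψ h)

/-- `Ψ` is continuous: `Ψ(h_k) → Ψ(h)` whenever `‖h_k − h‖_φ → 0`. -/
def OrliczContinuous {n : ℕ} (φ : ℝ → ℝ) (Ψ : (En n → ℝ) → En n) : Prop :=
  ∀ (hk : ℕ → En n → ℝ) (h : En n → ℝ), (∀ k, MemOrlicz φ (hk k)) → MemOrlicz φ h →
    Tendsto (fun k => orliczNorm φ (fun x => hk k x - h x)) atTop (𝓝 0) →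
    Tendsto (fun k => Ψ (hk k)) atTop (𝓝 (Ψ h))

/-- `Ψ` identifies functions that agree almost everywhere. -/
def RespectsAE {n : ℕ} (φ : ℝ → ℝ) (Ψ : (En n → ℝ) → En n) : Prop :=
  ∀ h₁ h₂ : En n → ℝ, MemOrlicz φ h₁ → MemOrlicz φ h₂ →
    (∀ᵐ x : En n, h₁ x = h₂ x) → Ψ h₁ = Ψ h₂

/-- The `Δ₂` condition: `φ(2t) ≤ C φ(t)` for all `t ≥ T`. -/
def SatisfiesDelta2 (φ : ℝ → ℝ) : Prop :=
  ∃ T C : ℝ, 0 ≤ T ∧ 0 < C ∧ ∀ t : ℝ, T ≤ t → φ (2 * t) ≤ C * φ t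

/-- A closed cube in `ℝⁿ`: `{x : cᵢ ≤ xᵢ ≤ dᵢ}` with all side lengths equal. -/
def IsClosedCube {n : ℕ} (C : Set (En n)) : Prop :=
  ∃ c d : Fin n → ℝ, (∃ L : ℝ, 0 ≤ L ∧ ∀ i, d i - c i = L) ∧
    C = {x : En n | ∀ i, c i ≤ x i ∧ x i ≤ d i}

section Part1


section Cone
variable {M : Type*} [AddCommGroup M] [Module ℝ M]

lemma hull_smul_mem {C : PointedCone ℝ M} {x : M} (hx : x ∈ C) {c : ℝ} (hc : 0 ≤ c) :
    c • x ∈ C := C.smul_mem hc hx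

lemma hull_ind {S : Set M} {p : M → Prop} (h0 : p 0) (hadd : ∀ x y, p x → p y → p (x + y))
    (hsm : ∀ (c : ℝ) x, 0 ≤ c → p x → p (c • x)) (hS : ∀ s ∈ S, p s) :
    ∀ x ∈ PointedCone.hull ℝ S, p x := by
  intro x hx
  induction hx using Submodule.span_induction with
  | mem x h => exact hS x h
  | zero => exact h0
  | add x y _ _ hx hy => exact hadd x y hx hy
  | smul a x _ hx => exact hsm a.1 x a.2 hx

/-- A finitely generated cone intersected with a halfspace is finitely generated. -/
lemma cone_cut (S : Set M) (hSf : S.Finite) (φ : M →ₗ[ℝ] ℝ) :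
    ∃ S' : Set M, S'.Finite ∧ ∀ x, x ∈ PointedCone.hull ℝ S' ↔ (x ∈ PointedCone.hull ℝ S ∧ 0 ≤ φ x) := by
  set Sp := {s ∈ S | 0 ≤ φ s} with hSp
  set Sm := {s ∈ S | φ s < 0} with hSm
  set Sc : Set M := (fun p : M × M => φ p.1 • p.2 - φ p.2 • p.1) '' (Sp ×ˢ Sm) with hSc
  have fp : Sp.Finite := hSf.subset (fun _ h => h.1)
  have fm : Sm.Finite := hSf.subset (fun _ h => h.1)
  refine ⟨Sp ∪ Sc, fp.union ((fp.prod fm).image _), fun x => ⟨fun hx => ?_, fun ⟨hx, hφ⟩ => ?_⟩⟩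
  · revert x
    apply hull_ind
    · simp
    · rintro x y ⟨h1, h2⟩ ⟨h3, h4⟩
      exact ⟨add_mem h1 h3, by rw [map_add]; positivity⟩
    · rintro c x hc ⟨h1, h2⟩
      exact ⟨hull_smul_mem h1 hc, by rw [map_smul, smul_eq_mul]; positivity⟩
    · rintro s (hs | ⟨⟨a, b⟩, ⟨ha, hb⟩, rfl⟩)
      · exact ⟨PointedCone.subset_hull hs.1, hs.2⟩
      · have hb' : φ b < 0 := hb.2
        refine ⟨?_, ?_⟩
        · simp only
          rw [sub_eq_add_neg, ← neg_smul]
          exact add_mem (hull_smul_mem (PointedCone.subset_hull hb.1) ha.2)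
            (hull_smul_mem (PointedCone.subset_hull ha.1) (by linarith))
        · simp only [map_sub, map_smul, smul_eq_mul]
          rw [mul_comm]; simp
  · have hSS : S = Sp ∪ Sm := by
      ext s; simp only [hSp, hSm, mem_union, mem_ofPred_eq]
      rcases le_or_gt 0 (φ s) with h | h
      · simp [h, not_lt.2 h]
      · simp [h, not_le.2 h]
    rw [hSS, PointedCone.hull, Submodule.span_union, Submodule.mem_sup] at hx
    obtain ⟨p, hp, q, hq, rfl⟩ := hx
    have hFp : ∀ p ∈ PointedCone.hull ℝ Sp, 0 ≤ φ p := by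
      apply hull_ind
      · simp
      · intro x y hx hy; rw [map_add]; positivity
      · intro c x hc hx; rw [map_smul, smul_eq_mul]; positivity
      · intro s hs; exact hs.2
    have hFq : ∀ p ∈ PointedCone.hull ℝ Sm, p = 0 ∨ φ p < 0 := by
      apply hull_ind
      · simp
      · rintro x y (rfl | hx) (rfl | hy)
        · simp
        · simp [hy]
        · simp [hx]
        · right; rw [map_add]; linarith
      · rintro c x hc (rfl | hx)
        · simp
        · rcases hc.eq_or_lt with rfl | hc
          · simp
          · right; rw [map_smul, smul_eq_mul]; exact mul_neg_of_pos_of_neg hc hx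
      · intro s hs; exact Or.inr hs.2
    set C' := PointedCone.hull ℝ (Sp ∪ Sc)
    have hpC : p ∈ C' := Submodule.span_mono subset_union_left hp
    have bil : ∀ p ∈ PointedCone.hull ℝ Sp, ∀ q ∈ PointedCone.hull ℝ Sm,
        φ p • q - φ q • p ∈ C' := by
      intro p hp
      apply hull_ind
      · simp
      · intro x y hx hy
        have : φ p • (x + y) - φ (x + y) • p = (φ p • x - φ x • p) + (φ p • y - φ y • p) := by
          rw [map_add]; module
        rw [this]; exact add_mem hx hy
      · intro c x hc hx
        have : φ p • (c • x) - φ (c • x) • p = c • (φ p • x - φ x • p) := by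
          rw [map_smul, smul_eq_mul]; module
        rw [this]; exact hull_smul_mem hx hc
      · intro s hs
        revert p
        apply hull_ind
        · simp
        · intro x y hx hy
          have : φ (x + y) • s - φ s • (x + y) = (φ x • s - φ s • x) + (φ y • s - φ s • y) := by
            rw [map_add]; module
          rw [this]; exact add_mem hx hy
        · intro c x hc hx
          have : φ (c • x) • s - φ s • (c • x) = c • (φ x • s - φ s • x) := by
            rw [map_smul, smul_eq_mul]; module
          rw [this]; exact hull_smul_mem hx hc
        · intro t ht
          exact PointedCone.subset_hull (Or.inr ⟨(t, s), ⟨ht, hs⟩, rfl⟩)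
    rcases hFq q hq with rfl | hlt
    · simpa using hpC
    · have h1 : φ p + φ q ≥ 0 := by rw [← map_add]; exact hφ
      have hF : 0 < φ p := by linarith
      have : p + q = (φ p)⁻¹ • (φ p • q - φ q • p) + (1 + φ q / φ p) • p := by
        rw [smul_sub, smul_smul, smul_smul, inv_mul_cancel₀ hF.ne', div_eq_inv_mul]; module
      rw [this]
      refine add_mem (hull_smul_mem (bil p hp q hq) (by positivity)) (hull_smul_mem hpC ?_)
      rw [← sub_neg_eq_add, sub_nonneg, ← neg_div, div_le_one hF]; linarith

lemma top_fg [FiniteDimensional ℝ M] : ∃ S : Set M, S.Finite ∧ ∀ x, x ∈ PointedCone.hull ℝ S := by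
  classical
  let b := Module.finBasis ℝ M
  refine ⟨range b ∪ range (fun i => - b i), (finite_range _).union (finite_range _), fun x => ?_⟩
  rw [← b.sum_repr x]
  refine sum_mem fun i _ => ?_
  rcases le_total 0 (b.repr x i) with h | h
  · exact hull_smul_mem (PointedCone.subset_hull (mem_union_left _ (mem_range_self i))) h
  · rw [← neg_smul_neg]
    exact hull_smul_mem (PointedCone.subset_hull (mem_union_right _ (mem_range_self i)))
      (neg_nonneg.2 h)

/-- A polyhedral cone is finitely generated. -/
lemma dual_fg [FiniteDimensional ℝ M] (Φ : Set (M →ₗ[ℝ] ℝ)) (hΦ : Φ.Finite) :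
    ∃ S : Set M, S.Finite ∧ ∀ x, x ∈ PointedCone.hull ℝ S ↔ ∀ φ ∈ Φ, 0 ≤ φ x := by
  induction Φ, hΦ using Set.Finite.induction_on with
  | empty => obtain ⟨S, h1, h2⟩ := top_fg (M := M); exact ⟨S, h1, by simpa using h2⟩
  | insert _ _ ih =>
    rename_i a s _ _
    obtain ⟨S, h1, h2⟩ := ih
    obtain ⟨S', h3, h4⟩ := cone_cut S h1 a
    refine ⟨S', h3, fun x => ?_⟩
    rw [h4, h2]; simp [and_comm]

end Cone

section HP
variable {n : ℕ}

/-- polyhedra -/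
def IsHP (s : Set (En n)) : Prop :=
  ∃ R : Set (En n × ℝ), R.Finite ∧ s = {x | ∀ r ∈ R, 0 ≤ inner ℝ r.1 x + r.2}

lemma IsHP.inter {s t : Set (En n)} (hs : IsHP s) (ht : IsHP t) : IsHP (s ∩ t) := by
  obtain ⟨R, hR, rfl⟩ := hs
  obtain ⟨R', hR', rfl⟩ := ht
  refine ⟨R ∪ R', hR.union hR', ?_⟩
  ext x; simp only [mem_inter_iff, mem_ofPred_eq, mem_union]
  constructor
  · rintro ⟨h1, h2⟩ r (h | h)
    exacts [h1 r h, h2 r h]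
  · intro h; exact ⟨fun r hr => h r (Or.inl hr), fun r hr => h r (Or.inr hr)⟩

lemma isHP_half (y : En n) (t : ℝ) : IsHP {x : En n | 0 ≤ inner ℝ y x + t} :=
  ⟨{(y, t)}, finite_singleton _, by simp⟩

lemma isHP_ge (y v : En n) (t : ℝ) : IsHP {x : En n | t ≤ inner ℝ y (x - v)} := by
  convert isHP_half y (- inner ℝ y v - t) using 3
  rw [inner_sub_right]; constructor <;> intro h <;> linarith

lemma isHP_le (y v : En n) (t : ℝ) : IsHP {x : En n | inner ℝ y (x - v) ≤ t} := by
  convert isHP_half (-y) (inner ℝ y v + t) using 3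
  rw [inner_sub_right, inner_neg_left]; constructor <;> intro h <;> linarith

lemma isHP_eq (y v : En n) (t : ℝ) : IsHP {x : En n | inner ℝ y (x - v) = t} := by
  convert (isHP_le y v t).inter (isHP_ge y v t) using 1
  ext x; simp [le_antisymm_iff]

/-- polyhedral cone with apex `v`. -/
def PCone (v : En n) (C : Set (En n)) : Set (En n) := {x | ∀ c ∈ C, 0 ≤ inner ℝ c (x - v)}

lemma isHP_cone (v : En n) {C : Set (En n)} (hC : C.Finite) : IsHP (PCone v C) := by
  refine ⟨(fun c => (c, - inner ℝ c v)) '' C, hC.image _, ?_⟩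
  ext x; simp [PCone, inner_sub_right]

lemma IsPolytope.nonempty {Q : Set (En n)} (h : IsPolytope Q) : Q.Nonempty := by
  obtain ⟨S, hS, rfl⟩ := h; simpa using hS

lemma IsPolytope.convex {Q : Set (En n)} (h : IsPolytope Q) : Convex ℝ Q := by
  obtain ⟨S, hS, rfl⟩ := h; exact convex_convexHull _ _

lemma IsPolytope.isCompact {Q : Set (En n)} (h : IsPolytope Q) : IsCompact Q := by
  obtain ⟨S, hS, rfl⟩ := h; exact S.finite_toSet.isCompact_convexHull ℝ

lemma IsPolytope.isHP {Q : Set (En n)} (h : IsPolytope Q) : IsHP Q := by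
  have hcl := h.isCompact.isClosed
  have hcv := h.convex
  obtain ⟨S, hS, rfl⟩ := h
  let ev : En n → (En n × ℝ →ₗ[ℝ] ℝ) := fun x =>
    ((innerₗ (En n)).flip x).coprod LinearMap.id
  have hev : ∀ x r, ev x r = inner ℝ r.1 x + r.2 := fun x r => by simp [ev, real_inner_comm]
  obtain ⟨R, hR, hRS⟩ := dual_fg (ev '' (S : Set (En n))) (S.finite_toSet.image _)
  refine ⟨R, hR, Subset.antisymm ?_ ?_⟩
  · refine convexHull_min ?_ ?_
    · intro s hs r hr
      have := (hRS r).1 (PointedCone.subset_hull hr) (ev s) ⟨s, hs, rfl⟩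
      rwa [hev] at this
    · intro x hx y hy a b ha hb hab r hr
      have h1 := hx r hr
      have h2 := hy r hr
      rw [inner_add_right, inner_smul_right, inner_smul_right]
      have : a * inner ℝ r.1 x + b * inner ℝ r.1 y + r.2 =
        a * (inner ℝ r.1 x + r.2) + b * (inner ℝ r.1 y + r.2) := by
        linear_combination (-r.2) * hab
      rw [this]; positivity
  · intro x hx
    by_contra hxn
    obtain ⟨f, u, hfu, hfx⟩ := geometric_hahn_banach_closed_point hcv hcl hxn
    obtain ⟨y, hy⟩ := (InnerProductSpace.toDual ℝ (En n)).surjective f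
    have hf : ∀ z, f z = inner ℝ y z := fun z => by rw [← hy]; simp
    have hmem : ((-y, u) : En n × ℝ) ∈ PointedCone.hull ℝ R := by
      rw [hRS]
      rintro _ ⟨s, hs, rfl⟩
      rw [hev]
      have := hfu s (subset_convexHull _ _ hs)
      rw [hf] at this
      simp only [inner_neg_left]; linarith
    have hpos : ∀ r ∈ PointedCone.hull ℝ R, 0 ≤ inner ℝ r.1 x + r.2 := by
      apply hull_ind
      · simp
      · intro a b ha hb
        simp only [Prod.fst_add, Prod.snd_add, inner_add_left]; linarith
      · intro c a hc ha
        simp only [Prod.smul_fst, Prod.smul_snd, inner_smul_left, smul_eq_mul]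
        simp only [conj_trivial]
        rw [← mul_add]; positivity
      · exact hx
    have := hpos _ hmem
    simp only [inner_neg_left] at this
    rw [hf] at hfx; linarith

lemma IsHP.isPolytope {Q : Set (En n)} (h : IsHP Q) (hne : Q.Nonempty)
    (hb : Bornology.IsBounded Q) : IsPolytope Q := by
  classical
  obtain ⟨R, hR, rfl⟩ := h
  let ev : En n × ℝ → (En n × ℝ →ₗ[ℝ] ℝ) := fun r =>
    (innerₗ (En n) r.1).coprod (r.2 • LinearMap.id)
  have hev : ∀ r z, ev r z = inner ℝ r.1 z.1 + r.2 * z.2 := fun r z => by simp [ev]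
  obtain ⟨S, hS, hSR⟩ := dual_fg (insert (LinearMap.snd ℝ (En n) ℝ) (ev '' R)) ((hR.image _).insert _)
  have key : ∀ z : En n × ℝ, z ∈ PointedCone.hull ℝ S ↔
      0 ≤ z.2 ∧ ∀ r ∈ R, 0 ≤ inner ℝ r.1 z.1 + r.2 * z.2 := by
    intro z; rw [hSR, forall_mem_insert, forall_mem_image]; simp [hev]
  set Q : Set (En n) := {x | ∀ r ∈ R, 0 ≤ inner ℝ r.1 x + r.2} with hQ
  -- generators at height zero vanish
  have hzero : ∀ s ∈ S, s.2 = 0 → s.1 = 0 := by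
    intro s hs h0
    by_contra hne0
    obtain ⟨x, hx⟩ := hne
    obtain ⟨B, hB⟩ := hb.exists_norm_le
    have hs' := ((key s).1 (PointedCone.subset_hull hs)).2
    have hin : ∀ t : ℝ, 0 ≤ t → x + t • s.1 ∈ Q := by
      intro t ht r hr
      have h1 := hx r hr
      have h2 := hs' r hr
      rw [h0, mul_zero, add_zero] at h2
      rw [inner_add_right, inner_smul_right]
      have := mul_nonneg ht h2
      linarith
    have hns : 0 < ‖s.1‖ := norm_pos_iff.2 hne0
    have hxB := hB x hx
    have hB0 : 0 ≤ B := (norm_nonneg _).trans hxB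
    have := hB _ (hin ((2 * B + 1) / ‖s.1‖) (by positivity))
    have h3 : ‖((2 * B + 1) / ‖s.1‖) • s.1‖ = 2 * B + 1 := by
      rw [norm_smul, Real.norm_eq_abs, abs_of_nonneg (by positivity)]; field_simp
    have h4 := norm_sub_le (x + ((2 * B + 1) / ‖s.1‖) • s.1) x
    rw [add_sub_cancel_left, h3] at h4
    linarith
  set V : Set (En n) := (fun s : En n × ℝ => s.2⁻¹ • s.1) '' {s ∈ S | 0 < s.2} with hV
  have hVf : V.Finite := (hS.subset (fun _ h => h.1)).image _
  have hVQ : V ⊆ Q := by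
    rintro _ ⟨s, ⟨hs, hpos⟩, rfl⟩ r hr
    have := ((key s).1 (PointedCone.subset_hull hs)).2 r hr
    simp only [inner_smul_right]
    have h5 : s.2⁻¹ * inner ℝ r.1 s.1 + r.2 = s.2⁻¹ * (inner ℝ r.1 s.1 + r.2 * s.2) := by
      field_simp
    rw [h5]; positivity
  have hQc : Convex ℝ Q := by
    intro x hx y hy a b ha hb hab r hr
    have h1 := hx r hr
    have h2 := hy r hr
    rw [inner_add_right, inner_smul_right, inner_smul_right]
    have : a * inner ℝ r.1 x + b * inner ℝ r.1 y + r.2 =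
      a * (inner ℝ r.1 x + r.2) + b * (inner ℝ r.1 y + r.2) := by
      linear_combination (-r.2) * hab
    rw [this]; positivity
  have hhull : ∀ z ∈ PointedCone.hull ℝ S, (0 ≤ z.2 ∧ (z.2 = 0 → z.1 = 0) ∧
      (0 < z.2 → z.2⁻¹ • z.1 ∈ convexHull ℝ V)) := by
    apply hull_ind
    · simp
    · rintro x y ⟨hx, hx1, hx2⟩ ⟨hy, hy1, hy2⟩
      refine ⟨add_nonneg hx hy, ?_, ?_⟩
      · intro h
        simp only [Prod.snd_add] at h
        simp [hx1 (by linarith), hy1 (by linarith)]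
      · intro h
        rcases hx.eq_or_lt with h0 | h0
        · simp [← h0, hx1 h0.symm] at h ⊢
          exact hy2 h
        · rcases hy.eq_or_lt with h0' | h0'
          · simp [← h0', hy1 h0'.symm] at h ⊢
            exact hx2 h
          · have := (convex_convexHull ℝ V) (hx2 h0) (hy2 h0')
              (a := x.2 / (x.2 + y.2)) (b := y.2 / (x.2 + y.2)) (by positivity) (by positivity)
              (by field_simp)
            convert this using 1
            simp only [Prod.fst_add, Prod.snd_add, smul_smul, smul_add]
            congr 2 <;> field_simp
    · rintro c x hc ⟨hx, hx1, hx2⟩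
      refine ⟨mul_nonneg hc hx, ?_, ?_⟩
      · intro h
        simp only [Prod.smul_snd, smul_eq_mul, mul_eq_zero] at h
        rcases h with rfl | h
        · simp
        · simp [hx1 h]
      · intro h
        simp only [Prod.smul_snd, smul_eq_mul] at h
        have hc' : 0 < c := by
          rcases hc.eq_or_lt with rfl | h'
          · simp at h
          · exact h'
        have hx' : 0 < x.2 := pos_of_mul_pos_right h hc
        convert hx2 hx' using 1
        simp only [Prod.smul_snd, Prod.smul_fst, smul_eq_mul, smul_smul]
        congr 1; field_simp
    · intro s hs
      have := ((key s).1 (PointedCone.subset_hull hs)).1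
      exact ⟨this, hzero s hs, fun h => subset_convexHull _ _ ⟨s, ⟨hs, h⟩, rfl⟩⟩
  have hEq : Q = convexHull ℝ V := by
    refine Subset.antisymm (fun x hx => ?_) (convexHull_min hVQ hQc)
    have := (hhull (x, 1) ((key _).2 ⟨by simp, fun r hr => by simpa using hx r hr⟩)).2.2 (by simp)
    simpa using this
  refine ⟨hVf.toFinset, ?_, by simpa using hEq⟩
  rw [hEq] at hne
  simpa using hne

lemma IsPolytope.inter_hp {Q s : Set (En n)} (h : IsPolytope Q) (hs : IsHP s)
    (hne : (Q ∩ s).Nonempty) : IsPolytope (Q ∩ s) :=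
  (h.isHP.inter hs).isPolytope hne (h.isCompact.isBounded.subset inter_subset_left)

lemma IsPolytope.hull_insert {Q : Set (En n)} (h : IsPolytope Q) (v : En n) :
    IsPolytope (convexHull ℝ (insert v Q)) := by
  classical
  obtain ⟨S, hS, rfl⟩ := h
  refine ⟨insert v S, by simp, ?_⟩
  rw [Set.insert_eq, convexHull_convexHull_union_right]; simp

lemma IsPolytope.union_of_convex {P Q : Set (En n)} (hP : IsPolytope P) (hQ : IsPolytope Q)
    (h : Convex ℝ (P ∪ Q)) : IsPolytope (P ∪ Q) := by
  classical
  obtain ⟨S, hS, rfl⟩ := hP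
  obtain ⟨T, hT, rfl⟩ := hQ
  refine ⟨S ∪ T, hS.mono (by simp), ?_⟩
  rw [← h.convexHull_eq, convexHull_convexHull_union_left, convexHull_convexHull_union_right]
  simp

end HP

end Part1

section Part2


section Join
variable {n : ℕ}

lemma mem_hull_insert {Q : Set (En n)} (hc : Convex ℝ Q) (hne : Q.Nonempty) (v x : En n) :
    x ∈ convexHull ℝ (insert v Q) ↔ ∃ y ∈ Q, ∃ t : ℝ, 0 ≤ t ∧ t ≤ 1 ∧ x = v + t • (y - v) := by
  rw [convexHull_insert hne, hc.convexHull_eq, mem_convexJoin]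
  simp only [mem_singleton_iff, exists_eq_left]
  constructor
  · rintro ⟨y, hy, a, b, ha, hb, hab, rfl⟩
    refine ⟨y, hy, b, hb, by linarith, ?_⟩
    rw [← eq_sub_iff_add_eq] at hab; subst hab; module
  · rintro ⟨y, hy, t, h0, h1, rfl⟩
    exact ⟨y, hy, 1 - t, t, by linarith, h0, by ring, by module⟩

lemma join_union {P Q : Set (En n)} (hP : IsPolytope P) (hQ : IsPolytope Q)
    (hU : IsPolytope (P ∪ Q)) (v : En n) :
    convexHull ℝ (insert v (P ∪ Q)) = convexHull ℝ (insert v P) ∪ convexHull ℝ (insert v Q) := by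
  ext x
  rw [mem_union, mem_hull_insert hP.convex hP.nonempty, mem_hull_insert hQ.convex hQ.nonempty,
    mem_hull_insert hU.convex hU.nonempty]
  constructor
  · rintro ⟨y, hy | hy, h⟩
    exacts [Or.inl ⟨y, hy, h⟩, Or.inr ⟨y, hy, h⟩]
  · rintro (⟨y, hy, h⟩ | ⟨y, hy, h⟩)
    exacts [⟨y, Or.inl hy, h⟩, ⟨y, Or.inr hy, h⟩]

lemma join_inter {P Q : Set (En n)} (hP : IsPolytope P) (hQ : IsPolytope Q)
    (hU : IsPolytope (P ∪ Q)) (hI : IsPolytope (P ∩ Q)) (v : En n) :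
    convexHull ℝ (insert v (P ∩ Q)) = convexHull ℝ (insert v P) ∩ convexHull ℝ (insert v Q) := by
  ext x
  rw [mem_inter_iff, mem_hull_insert hP.convex hP.nonempty, mem_hull_insert hQ.convex hQ.nonempty,
    mem_hull_insert hI.convex hI.nonempty]
  constructor
  · rintro ⟨y, hy, h⟩
    exact ⟨⟨y, hy.1, h⟩, ⟨y, hy.2, h⟩⟩
  · rintro ⟨⟨y, hy, t, ht0, ht1, hx⟩, ⟨z, hz, s, hs0, hs1, hx'⟩⟩
    by_cases hxv : x = v
    · obtain ⟨w, hw⟩ := hI.nonempty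
      exact ⟨w, hw, 0, le_rfl, zero_le_one, by simp [hxv]⟩
    have ht : 0 < t := by
      rcases ht0.eq_or_lt with rfl | h
      · simp at hx; exact absurd hx hxv
      · exact h
    have hs : 0 < s := by
      rcases hs0.eq_or_lt with rfl | h
      · simp at hx'; exact absurd hx' hxv
      · exact h
    have hseg : segment ℝ y z ⊆ P ∪ Q := hU.convex.segment_subset (Or.inl hy) (Or.inr hz)
    have hpre : IsPreconnected (segment ℝ y z) := (convex_segment y z).isPreconnected
    rw [isPreconnected_closed_iff] at hpre
    obtain ⟨w, hw, hwP, hwQ⟩ := hpre P Q hP.isCompact.isClosed hQ.isCompact.isClosed hseg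
      ⟨y, left_mem_segment _ _ _, hy⟩ ⟨z, right_mem_segment _ _ _, hz⟩
    obtain ⟨a, b, ha, hb, hab, rfl⟩ := hw
    have hyv : y - v = t⁻¹ • (x - v) := by
      rw [hx, add_sub_cancel_left, smul_smul, inv_mul_cancel₀ ht.ne', one_smul]
    have hzv : z - v = s⁻¹ • (x - v) := by
      rw [hx', add_sub_cancel_left, smul_smul, inv_mul_cancel₀ hs.ne', one_smul]
    have h1 : 1 ≤ t⁻¹ := (one_le_inv₀ ht).2 ht1
    have h2 : 1 ≤ s⁻¹ := (one_le_inv₀ hs).2 hs1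
    have hk : 1 ≤ a * t⁻¹ + b * s⁻¹ := by nlinarith
    have hwv : a • y + b • z - v = (a * t⁻¹ + b * s⁻¹) • (x - v) := by
      have : a • y + b • z - v = a • (y - v) + b • (z - v) := by
        rw [← eq_sub_iff_add_eq] at hab; subst hab; module
      rw [this, hyv, hzv]; module
    refine ⟨_, ⟨hwP, hwQ⟩, (a * t⁻¹ + b * s⁻¹)⁻¹, by positivity, inv_le_one_of_one_le₀ hk, ?_⟩
    rw [hwv, smul_smul, inv_mul_cancel₀ (by positivity), one_smul]; abel

end Join

section Cells
variable {n : ℕ} {G : Type*} [AddCommGroup G]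

/-- valuation on the polytopes inside `W`. -/
def ValOn (W : Set (En n)) (Z : Set (En n) → G) : Prop :=
  ∀ P Q : Set (En n), IsPolytope P → IsPolytope Q → P ⊆ W → Q ⊆ W → IsPolytope (P ∪ Q) →
    IsPolytope (P ∩ Q) → Z P + Z Q = Z (P ∪ Q) + Z (P ∩ Q)

lemma ray_zero {s : Set (En n)} (hb : Bornology.IsBounded s) {p w : En n}
    (h : ∀ t : ℝ, 0 ≤ t → p + t • w ∈ s) : w = 0 := by
  by_contra hne0
  obtain ⟨B, hB⟩ := hb.exists_norm_le
  have hns : 0 < ‖w‖ := norm_pos_iff.2 hne0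
  have hxB := hB p (by simpa using h 0 le_rfl)
  have hB0 : 0 ≤ B := (norm_nonneg _).trans hxB
  have := hB _ (h ((2 * B + 1) / ‖w‖) (by positivity))
  have h3 : ‖((2 * B + 1) / ‖w‖) • w‖ = 2 * B + 1 := by
    rw [norm_smul, Real.norm_eq_abs, abs_of_nonneg (by positivity)]; field_simp
  have h4 := norm_sub_le (p + ((2 * B + 1) / ‖w‖) • w) p
  rw [add_sub_cancel_left, h3] at h4
  linarith

lemma PCone.smul_mem {v : En n} {C : Set (En n)} {x : En n} (hx : x ∈ PCone v C) {t : ℝ}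
    (ht : 0 ≤ t) : v + t • (x - v) ∈ PCone v C := by
  intro c hc
  rw [add_sub_cancel_left, inner_smul_right]
  exact mul_nonneg ht (hx c hc)

lemma PCone.add_mem {v : En n} {C : Set (En n)} {x y : En n} (hx : x ∈ PCone v C)
    (hy : y ∈ PCone v C) : x + (y - v) ∈ PCone v C := by
  intro c hc
  rw [show x + (y - v) - v = (x - v) + (y - v) by abel, inner_add_right]
  exact add_nonneg (hx c hc) (hy c hc)

lemma PCone.union (v : En n) (C D : Set (En n)) : PCone v (C ∪ D) = PCone v C ∩ PCone v D := by
  ext x; simp only [PCone, mem_inter_iff, mem_ofPred_eq, mem_union]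
  constructor
  · intro h; exact ⟨fun c hc => h c (Or.inl hc), fun c hc => h c (Or.inr hc)⟩
  · rintro ⟨h1, h2⟩ c (h | h)
    exacts [h1 c h, h2 c h]

lemma cut_list {W : Set (En n)} {Z : Set (En n) → G} (hval : ValOn W Z) (v : En n)
    (L : Set (En n)) (hL : L.Finite) : ∀ P, IsPolytope P → P ⊆ W →
      (∀ C : Set (En n), C.Finite → (∀ f ∈ L, f ∈ C ∨ -f ∈ C) → (P ∩ PCone v C).Nonempty →
        Z (P ∩ PCone v C) = 0) → Z P = 0 := by
  induction L, hL using Set.Finite.induction_on with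
  | empty =>
    intro P hP _ h
    have := h ∅ finite_empty (by simp) (by simpa [PCone] using hP.nonempty)
    simpa [PCone] using this
  | insert _ _ ih =>
    rename_i f L _ _
    intro P hP hPW h
    have key : ∀ D : Set (En n), D.Finite → (f ∈ D ∨ -f ∈ D) → (P ∩ PCone v D).Nonempty →
        Z (P ∩ PCone v D) = 0 := by
      intro D hD hfD hne
      apply ih _ (hP.inter_hp (isHP_cone v hD) hne) (inter_subset_left.trans hPW)
      intro C hC hfC hne'
      rw [inter_assoc, ← PCone.union] at hne' ⊢
      apply h _ (hD.union hC) _ hne'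
      rintro g (rfl | hg)
      · exact hfD.imp Or.inl Or.inl
      · exact (hfC g hg).imp Or.inr Or.inr
    have hcov : P = (P ∩ PCone v {f}) ∪ (P ∩ PCone v {-f}) := by
      rw [← inter_union_distrib_left, eq_comm, inter_eq_left]
      intro x _
      simp only [PCone, mem_union, mem_ofPred_eq, mem_singleton_iff, forall_eq, inner_neg_left]
      rcases le_total 0 (inner ℝ f (x - v)) with h | h
      · exact Or.inl h
      · exact Or.inr (by linarith)
    rcases (P ∩ PCone v {f}).eq_empty_or_nonempty with h1 | h1
    · rw [h1, empty_union] at hcov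
      rw [hcov]; apply key _ (finite_singleton _) (by simp)
      rw [← hcov]; exact hP.nonempty
    rcases (P ∩ PCone v {-f}).eq_empty_or_nonempty with h2 | h2
    · rw [h2, union_empty] at hcov
      rw [hcov]; apply key _ (finite_singleton _) (by simp)
      rw [← hcov]; exact hP.nonempty
    have p1 := hP.inter_hp (isHP_cone v (finite_singleton f)) h1
    have p2 := hP.inter_hp (isHP_cone v (finite_singleton (-f))) h2
    have hint : (P ∩ PCone v {f}) ∩ (P ∩ PCone v {-f}) = P ∩ PCone v ({f} ∪ {-f}) := by
      rw [PCone.union]; ext; simp; tauto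
    have hne : (P ∩ PCone v ({f} ∪ {-f})).Nonempty := by
      rw [← hint]
      have hpre : IsPreconnected P := hP.convex.isPreconnected
      rw [isPreconnected_closed_iff] at hpre
      obtain ⟨w, hw, h3, h4⟩ := hpre _ _ p1.isCompact.isClosed p2.isCompact.isClosed hcov.subset
        (by rw [inter_eq_right.2 inter_subset_left]; exact h1)
        (by rw [inter_eq_right.2 inter_subset_left]; exact h2)
      exact ⟨w, h3, h4⟩
    have := hval _ _ p1 p2 (inter_subset_left.trans hPW) (inter_subset_left.trans hPW)
      (by rw [← hcov]; exact hP)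
      (by rw [hint]; exact hP.inter_hp (isHP_cone v (by simp)) hne)
    rw [← hcov, hint, key _ (by simp) (by simp) hne, key _ (by simp) (by simp) h1,
      key _ (by simp) (by simp) h2] at this
    simpa using this.symm

lemma exists_top {α : Type*} (r : α → α → Prop) (htr : ∀ a b c, r a b → r b c → r a c)
    (S : Set α) (hS : S.Finite) (hne : S.Nonempty) (htot : ∀ a ∈ S, ∀ b ∈ S, r a b ∨ r b a) :
    ∃ m ∈ S, ∀ a ∈ S, r a m := by
  induction S, hS using Set.Finite.induction_on with
  | empty => simp at hne
  | insert _ _ ih =>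
    rename_i a S _ _
    have haa : r a a := by simpa using htot a (by simp) a (by simp)
    rcases S.eq_empty_or_nonempty with rfl | hS
    · exact ⟨a, by simp, by simpa using haa⟩
    obtain ⟨m, hm, hmax⟩ := ih hS (fun x hx y hy => htot x (Or.inr hx) y (Or.inr hy))
    rcases htot a (by simp) m (Or.inr hm) with h | h
    · refine ⟨m, Or.inr hm, ?_⟩
      rintro b (rfl | hb)
      exacts [h, hmax b hb]
    · refine ⟨a, by simp, ?_⟩
      rintro b (rfl | hb)
      exacts [haa, htr _ _ _ (hmax b hb) h]

section cell
variable {W : Set (En n)} {Z : Set (En n) → G} {v : En n}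

lemma cone_pos {C : Set (En n)} {u : En n}
    (hb : Bornology.IsBounded (PCone v C ∩ {x | inner ℝ u (x - v) ≤ 1})) {x : En n}
    (hx : x ∈ PCone v C) (hu : inner ℝ u (x - v) ≤ 0) : x = v := by
  have := ray_zero hb (p := v) (w := x - v) (fun t ht => ⟨PCone.smul_mem hx ht, by
    simp only [mem_ofPred_eq]
    rw [add_sub_cancel_left, inner_smul_right]; nlinarith⟩)
  exact sub_eq_zero.1 this

lemma apex_mem (v : En n) (C : Set (En n)) : v ∈ PCone v C := by intro c _; simp

lemma cone_polytope {C : Set (En n)} (hC : C.Finite) {u : En n}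
    (hb : Bornology.IsBounded (PCone v C ∩ {x | inner ℝ u (x - v) ≤ 1})) :
    IsPolytope (PCone v C ∩ {x | inner ℝ u (x - v) ≤ 1}) :=
  ((isHP_cone v hC).inter (isHP_le u v 1)).isPolytope ⟨v, apex_mem v C, by simp⟩ hb

lemma cone_zero (h1 : Z {v} = 0)
    (h2 : ∀ f : En n, ∀ F, IsPolytope F → F ⊆ W → (∀ x ∈ F, inner ℝ f (x - v) = 1) →
      Z F = 0 ∧ Z (convexHull ℝ (insert v F)) = 0)
    {C : Set (En n)} (hC : C.Finite) (hCW : PCone v C ⊆ W) {u : En n}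
    (hb : Bornology.IsBounded (PCone v C ∩ {x | inner ℝ u (x - v) ≤ 1})) :
    Z (PCone v C ∩ {x | inner ℝ u (x - v) ≤ 1}) = 0 := by
  set T := PCone v C ∩ {x | inner ℝ u (x - v) ≤ 1} with hT
  set F := PCone v C ∩ {x | inner ℝ u (x - v) = 1} with hF
  have hscale : ∀ x ∈ PCone v C, x ≠ v → 0 < inner ℝ u (x - v) ∧
      v + (inner ℝ u (x - v) : ℝ)⁻¹ • (x - v) ∈ F := by
    intro x hx hxv
    have hpos : 0 < inner ℝ u (x - v) := by
      by_contra hcon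
      exact hxv (cone_pos hb hx (not_lt.1 hcon))
    refine ⟨hpos, PCone.smul_mem hx (by positivity), ?_⟩
    simp only [mem_ofPred_eq]
    rw [add_sub_cancel_left, inner_smul_right, inv_mul_cancel₀ hpos.ne']
  have hvT : v ∈ T := ⟨apex_mem v C, by simp⟩
  rcases F.eq_empty_or_nonempty with hFe | hFne
  · have : T = {v} := by
      refine Subset.antisymm (fun x hx => ?_) (singleton_subset_iff.2 hvT)
      by_contra hxv
      have := (hscale x hx.1 hxv).2
      rw [hFe] at this; exact this
    rw [this, h1]
  · have hFT : F ⊆ T := fun x hx => ⟨hx.1, le_of_eq hx.2⟩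
    have hFp : IsPolytope F := ((isHP_cone v hC).inter (isHP_eq u v 1)).isPolytope hFne (hb.subset hFT)
    have : T = convexHull ℝ (insert v F) := by
      ext x
      rw [mem_hull_insert hFp.convex hFne]
      constructor
      · intro hx
        by_cases hxv : x = v
        · obtain ⟨y, hy⟩ := hFne
          exact ⟨y, hy, 0, le_rfl, zero_le_one, by simp [hxv]⟩
        · obtain ⟨hp, hm⟩ := hscale x hx.1 hxv
          refine ⟨_, hm, inner ℝ u (x - v), hp.le, hx.2, ?_⟩
          rw [add_sub_cancel_left, smul_smul, mul_inv_cancel₀ hp.ne', one_smul]; abel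
      · rintro ⟨y, hy, t, ht0, ht1, rfl⟩
        refine ⟨PCone.smul_mem hy.1 ht0, ?_⟩
        have hy2 : inner ℝ u (y - v) = 1 := hy.2
        simp only [mem_ofPred_eq]
        rw [add_sub_cancel_left, inner_smul_right, hy2, mul_one]; exact ht1
    rw [this]
    exact (h2 u F hFp (inter_subset_left.trans hCW) (fun x hx => hx.2)).2

lemma cell_zero (hval : ValOn W Z) (h1 : Z {v} = 0)
    (h2 : ∀ f : En n, ∀ F, IsPolytope F → F ⊆ W → (∀ x ∈ F, inner ℝ f (x - v) = 1) →
      Z F = 0 ∧ Z (convexHull ℝ (insert v F)) = 0)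
    {C : Set (En n)} (hC : C.Finite) (hCW : PCone v C ⊆ W) {u l : En n}
    (hb : Bornology.IsBounded
      (PCone v C ∩ {x | inner ℝ u (x - v) ≤ 1} ∩ {x | 1 ≤ inner ℝ l (x - v)}))
    (hne : (PCone v C ∩ {x | inner ℝ u (x - v) ≤ 1} ∩ {x | 1 ≤ inner ℝ l (x - v)}).Nonempty)
    (hu0 : ∀ x ∈ PCone v C, 0 ≤ inner ℝ u (x - v))
    (hl0 : (∀ x ∈ PCone v C, 0 ≤ inner ℝ l (x - v)) ∨ (∀ x ∈ PCone v C, inner ℝ l (x - v) ≤ 0))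
    (hul : (∀ x ∈ PCone v C, inner ℝ u (x - v) ≤ inner ℝ l (x - v)) ∨
      (∀ x ∈ PCone v C, inner ℝ l (x - v) ≤ inner ℝ u (x - v))) :
    Z (PCone v C ∩ {x | inner ℝ u (x - v) ≤ 1} ∩ {x | 1 ≤ inner ℝ l (x - v)}) = 0 := by
  set P := PCone v C ∩ {x | inner ℝ u (x - v) ≤ 1} ∩ {x | 1 ≤ inner ℝ l (x - v)} with hP
  have hPp : IsPolytope P :=
    (((isHP_cone v hC).inter (isHP_le u v 1)).inter (isHP_ge l v 1)).isPolytope hne hb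
  have hPW : P ⊆ W := fun x hx => hCW hx.1.1
  by_cases hall : ∀ x ∈ P, inner ℝ u (x - v) = 1
  · exact (h2 u P hPp hPW hall).1
  push Not at hall
  obtain ⟨p, hp, hp1⟩ := hall
  have hpu : inner ℝ u (p - v) < 1 := lt_of_le_of_ne hp.1.2 hp1
  have hpl : 1 ≤ inner ℝ l (p - v) := hp.2
  have hl0' : ∀ x ∈ PCone v C, 0 ≤ inner ℝ l (x - v) := by
    rcases hl0 with h | h
    · exact h
    · have := h p hp.1.1; linarith
  have hul' : ∀ x ∈ PCone v C, inner ℝ u (x - v) ≤ inner ℝ l (x - v) := by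
    rcases hul with h | h
    · exact h
    · have := h p hp.1.1; linarith
  set T := PCone v C ∩ {x | inner ℝ u (x - v) ≤ 1} with hT
  have hTb : Bornology.IsBounded T := by
    set a := inner ℝ u (p - v) with ha
    set b := inner ℝ l (p - v) with hb'
    have hba : 0 < b - a := by linarith
    have ha0 : 0 ≤ a := hu0 p hp.1.1
    set t := (b - a)⁻¹ with ht
    have htpos : 0 < t := inv_pos.2 hba
    have hs : 0 < t * a + 1 := by positivity
    set s := (t * a + 1)⁻¹ with hs'
    have hspos : 0 < s := inv_pos.2 hs
    have hmem : ∀ x ∈ T, v + s • (t • (p - v) + (x - v)) ∈ P := by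
      intro x hx
      have m1 : v + t • (p - v) + (x - v) ∈ PCone v C :=
        PCone.add_mem (PCone.smul_mem hp.1.1 htpos.le) hx.1
      have m2 := PCone.smul_mem m1 hspos.le
      rw [show v + t • (p - v) + (x - v) - v = t • (p - v) + (x - v) by abel] at m2
      have hxu : inner ℝ u (x - v) ≤ 1 := hx.2
      have hxl := hl0' x hx.1
      have hst : s * (t * a + 1) = 1 := inv_mul_cancel₀ hs.ne'
      have htb : t * b = t * a + 1 := by
        have : t * (b - a) = 1 := inv_mul_cancel₀ hba.ne'
        linarith
      refine ⟨⟨m2, ?_⟩, ?_⟩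
      · simp only [mem_ofPred_eq]
        rw [add_sub_cancel_left, inner_smul_right, inner_add_right, inner_smul_right, ← ha, ← hst]
        gcongr
      · simp only [mem_ofPred_eq]
        rw [add_sub_cancel_left, inner_smul_right, inner_add_right, inner_smul_right, ← hb', ← hst,
          htb]
        exact mul_le_mul_of_nonneg_left (by linarith) hspos.le
    obtain ⟨B, hB⟩ := hb.exists_norm_le
    refine isBounded_iff_forall_norm_le.2 ⟨s⁻¹ * (B + ‖v‖) + ‖t • (p - v)‖ + ‖v‖, fun x hx => ?_⟩
    have h3 := hB _ (hmem x hx)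
    have h4 : ‖s • (t • (p - v) + (x - v))‖ ≤ B + ‖v‖ := by
      have := norm_sub_le (v + s • (t • (p - v) + (x - v))) v
      rw [add_sub_cancel_left] at this; linarith
    rw [norm_smul, Real.norm_eq_abs, abs_of_pos hspos] at h4
    have h5 : ‖t • (p - v) + (x - v)‖ ≤ s⁻¹ * (B + ‖v‖) := by
      rw [← div_eq_inv_mul, le_div_iff₀ hspos]; linarith
    calc ‖x‖ = ‖(t • (p - v) + (x - v)) - t • (p - v) + v‖ := by congr 1; abel
      _ ≤ ‖(t • (p - v) + (x - v)) - t • (p - v)‖ + ‖v‖ := norm_add_le _ _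
      _ ≤ _ := by gcongr; exact (norm_sub_le _ _).trans (by gcongr)
  set B := PCone v C ∩ {x | inner ℝ l (x - v) ≤ 1} with hB
  have hBT : B ⊆ T := fun x hx => ⟨hx.1, (hul' x hx.1).trans hx.2⟩
  have hBb := hTb.subset hBT
  have hU : P ∪ B = T := by
    refine Subset.antisymm (union_subset inter_subset_left hBT) (fun x hx => ?_)
    rcases le_total 1 (inner ℝ l (x - v)) with h | h
    · exact Or.inl ⟨hx, h⟩
    · exact Or.inr ⟨hx.1, h⟩
  have hI : P ∩ B = PCone v C ∩ {x | inner ℝ l (x - v) = 1} := by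
    ext x
    constructor
    · rintro ⟨h3, h4⟩; exact ⟨h4.1, le_antisymm h4.2 h3.2⟩
    · rintro ⟨h3, h4⟩
      have h4 : inner ℝ l (x - v) = 1 := h4
      exact ⟨⟨⟨h3, (hul' x h3).trans h4.le⟩, h4.ge⟩, h3, h4.le⟩
  have hIne : (P ∩ B).Nonempty := by
    rw [hI]
    refine ⟨v + (inner ℝ l (p - v) : ℝ)⁻¹ • (p - v), PCone.smul_mem hp.1.1 (by positivity), ?_⟩
    simp only [mem_ofPred_eq]
    rw [add_sub_cancel_left, inner_smul_right, inv_mul_cancel₀ (by linarith)]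
  have hBp := cone_polytope hC hBb
  have hTp := cone_polytope hC hTb
  have hIp : IsPolytope (P ∩ B) := hPp.inter_hp hBp.isHP hIne
  have := hval P B hPp hBp hPW (inter_subset_left.trans hCW) (by rw [hU]; exact hTp) hIp
  rw [hU, cone_zero h1 h2 hC hCW hTb, cone_zero h1 h2 hC hCW hBb,
    (h2 l (P ∩ B) hIp (inter_subset_left.trans hPW) (fun x hx => by rw [hI] at hx; exact hx.2)).1] at this
  simpa using this

lemma all_zero (hval : ValOn W Z) (h1 : Z {v} = 0)
    (h2 : ∀ f : En n, ∀ F, IsPolytope F → F ⊆ W → (∀ x ∈ F, inner ℝ f (x - v) = 1) →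
      Z F = 0 ∧ Z (convexHull ℝ (insert v F)) = 0)
    {CW : Set (En n)} (hCWf : CW.Finite) (hCW : PCone v CW = W)
    (P : Set (En n)) (hP : IsPolytope P) (hPW : P ⊆ W) : Z P = 0 := by
  obtain ⟨R, hR, hPR⟩ := hP.isHP
  let ρ : En n × ℝ → ℝ := fun r => inner ℝ r.1 v + r.2
  have hρ : ∀ (r : En n × ℝ) (x : En n), inner ℝ r.1 x + r.2 = inner ℝ r.1 (x - v) + ρ r := by
    intro r x; simp only [ρ, inner_sub_right]; ring
  set U : Set (En n) := insert 0 ((fun r : En n × ℝ => -((ρ r)⁻¹ • r.1)) '' {r ∈ R | 0 < ρ r}) with hU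
  set Lo : Set (En n) := (fun r : En n × ℝ => -((ρ r)⁻¹ • r.1)) '' {r ∈ R | ρ r < 0} with hLo
  set C0 : Set (En n) := (fun r : En n × ℝ => r.1) '' {r ∈ R | ρ r = 0} ∪ CW with hC0
  have fU : U.Finite := ((hR.subset (fun _ h => h.1)).image _).insert _
  have fLo : Lo.Finite := (hR.subset (fun _ h => h.1)).image _
  have fC0 : C0.Finite := ((hR.subset (fun _ h => h.1)).image _).union hCWf
  have hPeq : ∀ x, x ∈ P ↔ x ∈ PCone v C0 ∧ (∀ u ∈ U, inner ℝ u (x - v) ≤ 1) ∧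
      (∀ l ∈ Lo, 1 ≤ inner ℝ l (x - v)) := by
    intro x
    constructor
    · intro hx
      have hxR : ∀ r ∈ R, 0 ≤ inner ℝ r.1 (x - v) + ρ r := by
        intro r hr; rw [← hρ]; rw [hPR] at hx; exact hx r hr
      refine ⟨?_, ?_, ?_⟩
      · rintro c (⟨r, ⟨hr, hr0⟩, rfl⟩ | hc)
        · have := hxR r hr; rw [hr0] at this; simpa using this
        · have := hPW hx; rw [← hCW] at this; exact this c hc
      · rintro u (rfl | ⟨r, ⟨hr, hr0⟩, rfl⟩)
        · simp
        · have := hxR r hr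
          simp only [inner_neg_left, inner_smul_left, conj_trivial]
          rw [← mul_neg, inv_mul_le_iff₀ hr0]; linarith
      · rintro u ⟨r, ⟨hr, hr0⟩, rfl⟩
        have := hxR r hr
        simp only [inner_neg_left, inner_smul_left, conj_trivial]
        rw [← neg_mul, ← inv_neg, ← div_eq_inv_mul, le_div_iff₀ (by linarith)]; linarith
    · rintro ⟨hc, hu, hl⟩
      rw [hPR]
      intro r hr
      rw [hρ]
      rcases lt_trichotomy (ρ r) 0 with h | h | h
      · have := hl _ ⟨r, ⟨hr, h⟩, rfl⟩
        simp only [inner_neg_left, inner_smul_left, conj_trivial] at this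
        rw [← neg_mul, ← inv_neg, ← div_eq_inv_mul, le_div_iff₀ (by linarith)] at this; linarith
      · have := hc r.1 (Or.inl ⟨r, ⟨hr, h⟩, rfl⟩)
        rw [h]; simpa using this
      · have := hu _ (Or.inr ⟨r, ⟨hr, h⟩, rfl⟩)
        simp only [inner_neg_left, inner_smul_left, conj_trivial] at this
        rw [← mul_neg, inv_mul_le_iff₀ h] at this; linarith
  refine cut_list hval v ((fun p : En n × En n => p.1 - p.2) '' ((U ∪ Lo) ×ˢ (U ∪ Lo)))
    (((fU.union fLo).prod (fU.union fLo)).image _) P hP hPW ?_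
  intro C hC hCL hne
  set K := PCone v (C0 ∪ C) with hK
  have fK : (C0 ∪ C).Finite := fC0.union hC
  have hKW : K ⊆ W := by
    intro x hx; rw [← hCW]; exact fun c hc => hx c (Or.inl (Or.inr hc))
  have htot : ∀ a ∈ U ∪ Lo, ∀ b ∈ U ∪ Lo, (∀ x ∈ K, inner ℝ a (x - v) ≤ inner ℝ b (x - v)) ∨
      (∀ x ∈ K, inner ℝ b (x - v) ≤ inner ℝ a (x - v)) := by
    intro a ha b hb
    rcases hCL (a - b) ⟨(a, b), ⟨ha, hb⟩, rfl⟩ with h | h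
    · right; intro x hx
      have := hx _ (Or.inr h)
      rw [inner_sub_left] at this; linarith
    · left; intro x hx
      have := hx _ (Or.inr h)
      rw [inner_neg_left, inner_sub_left] at this; linarith
  have h0U : (0 : En n) ∈ U := Or.inl rfl
  obtain ⟨u, huU, humax⟩ := exists_top (fun a b => ∀ x ∈ K, inner ℝ a (x - v) ≤ inner ℝ b (x - v))
    (fun a b c h h' x hx => (h x hx).trans (h' x hx)) U fU ⟨0, h0U⟩
    (fun a ha b hb => htot a (Or.inl ha) b (Or.inl hb))
  have hbP : Bornology.IsBounded (P ∩ PCone v C) := hP.isCompact.isBounded.subset inter_subset_left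
  rcases Lo.eq_empty_or_nonempty with hLe | hLne
  · have : P ∩ PCone v C = K ∩ {x | inner ℝ u (x - v) ≤ 1} := by
      ext x
      rw [mem_inter_iff, hPeq, hLe, hK, PCone.union v C0 C]
      constructor
      · rintro ⟨⟨h3, h4, _⟩, h5⟩; exact ⟨⟨h3, h5⟩, h4 u huU⟩
      · rintro ⟨⟨h3, h5⟩, h4⟩
        refine ⟨⟨h3, fun w hw => (humax w hw x ?_).trans h4, by simp⟩, h5⟩
        rw [hK, PCone.union v C0 C]; exact ⟨h3, h5⟩
    rw [this] at hbP ⊢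
    exact cone_zero h1 h2 fK hKW hbP
  · obtain ⟨l, hlL, hlmin⟩ := exists_top (fun a b => ∀ x ∈ K, inner ℝ b (x - v) ≤ inner ℝ a (x - v))
      (fun a b c h h' x hx => (h' x hx).trans (h x hx)) Lo fLo hLne
      (fun a ha b hb => (htot a (Or.inr ha) b (Or.inr hb)).symm)
    have : P ∩ PCone v C = K ∩ {x | inner ℝ u (x - v) ≤ 1} ∩ {x | 1 ≤ inner ℝ l (x - v)} := by
      ext x
      rw [mem_inter_iff, hPeq, hK, PCone.union v C0 C]
      constructor
      · rintro ⟨⟨h3, h4, h6⟩, h5⟩; exact ⟨⟨⟨h3, h5⟩, h4 u huU⟩, h6 l hlL⟩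
      · rintro ⟨⟨⟨h3, h5⟩, h4⟩, h6⟩
        have hxK : x ∈ K := by rw [hK, PCone.union v C0 C]; exact ⟨h3, h5⟩
        exact ⟨⟨h3, fun w hw => (humax w hw x hxK).trans h4,
          fun w hw => le_trans h6 (hlmin w hw x hxK)⟩, h5⟩
    rw [this] at hbP hne ⊢
    refine cell_zero hval h1 h2 fK hKW hbP hne ?_ ?_ ?_
    · intro x hx; simpa using humax 0 h0U x hx
    · have := htot 0 (Or.inl h0U) l (Or.inr hlL)
      simpa using this
    · exact htot u (Or.inl huU) l (Or.inr hlL)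

end cell
end Cells

end Part2

section Part3


section Simp
variable {n : ℕ} {G : Type*} [AddCommGroup G]

/-- affine independence of a finite set -/
def AffInd (T : Finset (En n)) : Prop :=
  ∀ w : En n → ℝ, ∑ t ∈ T, w t = 0 → ∑ t ∈ T, w t • t = 0 → ∀ t ∈ T, w t = 0

lemma hull_insert_hull (v : En n) (T : Set (En n)) :
    convexHull ℝ (insert v (convexHull ℝ T)) = convexHull ℝ (insert v T) := by
  rw [Set.insert_eq, convexHull_convexHull_union_right, ← Set.insert_eq]

lemma flat_cone (V : Submodule ℝ (En n)) (v : En n) :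
    ∃ C : Set (En n), C.Finite ∧ PCone v C = {x | x - v ∈ V} := by
  obtain ⟨B, hB⟩ := (IsNoetherian.noetherian Vᗮ : Vᗮ.FG)
  refine ⟨(B : Set (En n)) ∪ (fun b => -b) '' (B : Set (En n)),
    B.finite_toSet.union (B.finite_toSet.image _), ?_⟩
  ext x
  have : x - v ∈ V ↔ ∀ b ∈ B, inner ℝ b (x - v) = 0 := by
    constructor
    · intro h b hb
      have hb' : b ∈ Vᗮ := by rw [← hB]; exact Submodule.subset_span hb
      exact Submodule.inner_left_of_mem_orthogonal h hb'
    · intro h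
      rw [← Submodule.orthogonal_orthogonal V, Submodule.mem_orthogonal, ← hB]
      intro u hu
      induction hu using Submodule.span_induction with
      | mem x hx => exact h x hx
      | zero => simp
      | add a b _ _ ha hb => rw [inner_add_left, ha, hb, add_zero]
      | smul c a _ ha => rw [inner_smul_left, ha, mul_zero]
  simp only [mem_ofPred_eq, this, PCone, mem_union, SetLike.mem_coe, mem_image]
  constructor
  · intro h b hb
    have h1 := h b (Or.inl hb)
    have h2 := h (-b) (Or.inr ⟨b, hb, rfl⟩)
    rw [inner_neg_left] at h2; linarith
  · rintro h c (hc | ⟨b, hb, rfl⟩)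
    · exact (h c hc).ge
    · rw [inner_neg_left, h b hb, neg_zero]

lemma ValOn.mono {W W' : Set (En n)} {Z : Set (En n) → G} (h : ValOn W Z) (hW : W' ⊆ W) :
    ValOn W' Z := fun P Q hP hQ hPW hQW hU hI => h P Q hP hQ (hPW.trans hW) (hQW.trans hW) hU hI

lemma ValOn.join {W W' : Set (En n)} {Z : Set (En n) → G} (h : ValOn W Z) (hW : W' ⊆ W)
    (hc : Convex ℝ W) {v : En n} (hv : v ∈ W) :
    ValOn W' (fun P => Z (convexHull ℝ (insert v P))) := by
  intro P Q hP hQ hPW hQW hU hI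
  have hs : ∀ P, P ⊆ W' → convexHull ℝ (insert v P) ⊆ W := fun P hP =>
    convexHull_min (insert_subset hv (hP.trans hW)) hc
  simp only
  rw [join_union hP hQ hU, join_inter hP hQ hU hI]
  refine h _ _ (hP.hull_insert v) (hQ.hull_insert v) (hs P hPW) (hs Q hQW) ?_ ?_
  · rw [← join_union hP hQ hU]; exact hU.hull_insert v
  · rw [← join_inter hP hQ hU hI]; exact hI.hull_insert v

lemma flat_convex (V : Submodule ℝ (En n)) (v : En n) : Convex ℝ {x | x - v ∈ V} := by
  intro x hx y hy a b ha hb hab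
  have : a • x + b • y - v = a • (x - v) + b • (y - v) := by
    rw [← eq_sub_iff_add_eq] at hab; subst hab; module
  simp only [mem_ofPred_eq]
  rw [this]
  exact V.add_mem (V.smul_mem _ hx) (V.smul_mem _ hy)

lemma simplex_zero (d : ℕ) : ∀ (V : Submodule ℝ (En n)) (v : En n) (Z : Set (En n) → G),
    Module.finrank ℝ V = d → ValOn {x | x - v ∈ V} Z →
    (∀ T : Finset (En n), T.Nonempty → (∀ t ∈ T, t - v ∈ V) → AffInd T →
      Z (convexHull ℝ (T : Set (En n))) = 0) →
    ∀ P, IsPolytope P → (P ⊆ {x | x - v ∈ V}) → Z P = 0 := by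
  classical
  induction d using Nat.strong_induction_on with
  | _ d ih =>
  intro V v Z hd hval hT P hP hPW
  obtain ⟨CW, hCf, hCW⟩ := flat_cone V v
  refine all_zero hval ?_ ?_ hCf hCW P hP hPW
  · have := hT {v} (by simp) (by simp) (by intro w h1 _; simpa using h1)
    simpa using this
  · intro f F hF hFW hf
    obtain ⟨v', hv'⟩ := hF.nonempty
    have hv'V : v' - v ∈ V := hFW hv'
    set V' : Submodule ℝ (En n) := V ⊓ LinearMap.ker (innerₗ (En n) f) with hV'
    have mV' : ∀ x, x ∈ V' ↔ x ∈ V ∧ inner ℝ f x = 0 := by intro x; simp [hV']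
    have hlt : Module.finrank ℝ V' < d := by
      rw [← hd]
      apply Submodule.finrank_lt_finrank_of_lt
      refine lt_of_le_of_ne inf_le_left (fun h => ?_)
      have : v' - v ∈ V' := by rw [h]; exact hv'V
      have := ((mV' _).1 this).2
      rw [hf v' hv'] at this; norm_num at this
    have hsub : {x | x - v' ∈ V'} ⊆ {x | x - v ∈ V} := by
      intro x hx
      have := V.add_mem ((mV' _).1 hx).1 hv'V
      simpa using this
    have hF' : F ⊆ {x | x - v' ∈ V'} := by
      intro x hx
      refine (mV' _).2 ⟨?_, ?_⟩
      · have := V.sub_mem (hFW hx) hv'V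
        simpa using this
      · rw [show x - v' = (x - v) - (v' - v) by abel, inner_sub_right, hf x hx, hf v' hv', sub_self]
    have hone : ∀ t, t - v' ∈ V' → inner ℝ f (t - v) = 1 := by
      intro t ht
      rw [show t - v = (t - v') + (v' - v) by abel, inner_add_right, ((mV' _).1 ht).2, hf v' hv',
        zero_add]
    refine ⟨ih _ hlt V' v' Z rfl (hval.mono hsub) (fun T hTn hTV hTa =>
      hT T hTn (fun t ht => hsub (hTV t ht)) hTa) F hF hF', ?_⟩
    refine ih _ hlt V' v' (fun P => Z (convexHull ℝ (insert v P))) rfl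
      (hval.join hsub (flat_convex V v) (by simp)) (fun T hTn hTV hTa => ?_) F hF hF'
    rw [hull_insert_hull]
    have hvT : v ∉ T := by
      intro h
      have := hone v (hTV v h)
      simp at this
    have := hT (insert v T) (by simp) (by
      intro t ht
      rcases Finset.mem_insert.1 ht with rfl | ht
      · simp
      · exact hsub (hTV t ht)) (by
      intro w h1 h2
      rw [Finset.sum_insert hvT] at h1 h2
      have h3 : ∑ t ∈ T, w t = 0 := by
        have h4 : ∑ t ∈ T, w t • (t - v) = 0 := by
          simp only [smul_sub, Finset.sum_sub_distrib, ← Finset.sum_smul]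
          have e1 : ∑ t ∈ T, w t • t = -(w v • v) := (neg_eq_of_add_eq_zero_right h2).symm
          have e2 : ∑ t ∈ T, w t = -(w v) := (neg_eq_of_add_eq_zero_right h1).symm
          rw [e1, e2]; module
        have h5 := congrArg (fun z => inner ℝ f z) h4
        simp only [inner_sum, inner_smul_right, inner_zero_right] at h5
        rw [← h5]
        exact Finset.sum_congr rfl (fun t ht => by rw [hone t (hTV t ht), mul_one])
      have h6 : w v = 0 := by linarith
      rw [h6, zero_smul, zero_add] at h2
      intro t ht
      rcases Finset.mem_insert.1 ht with rfl | ht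
      · exact h6
      · exact hTa w h3 h2 t ht)
    simpa using this

theorem thmB (Y : Set (En n) → G) (hval : ValOn univ Y)
    (h : ∀ T : Finset (En n), LinearIndepOn ℝ id (T : Set (En n)) →
      (T.Nonempty → Y (convexHull ℝ (T : Set (En n))) = 0) ∧
      Y (convexHull ℝ (insert 0 (T : Set (En n)))) = 0) :
    ∀ P, IsPolytope P → Y P = 0 := by
  intro P hP
  refine all_zero (v := 0) (CW := ∅) hval ?_ ?_ finite_empty (by simp [PCone]) P hP (subset_univ _)
  · have := (h ∅ (by simp)).2
    simpa using this
  · intro f F hF _ hf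
    simp only [sub_zero] at hf
    obtain ⟨v', hv'⟩ := hF.nonempty
    set V' : Submodule ℝ (En n) := LinearMap.ker (innerₗ (En n) f) with hV'
    have mV' : ∀ x, x ∈ V' ↔ inner ℝ f x = 0 := by intro x; simp [hV']
    have hF' : F ⊆ {x | x - v' ∈ V'} := by
      intro x hx
      refine (mV' _).2 ?_
      rw [inner_sub_right, hf x hx, hf v' hv', sub_self]
    have hone : ∀ t, t - v' ∈ V' → inner ℝ f t = 1 := by
      intro t ht
      have := (mV' _).1 ht
      rw [inner_sub_right, hf v' hv'] at this
      linarith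
    have hli : ∀ T : Finset (En n), (∀ t ∈ T, t - v' ∈ V') → AffInd T →
        LinearIndepOn ℝ id (T : Set (En n)) := by
      intro T hT hA
      rw [linearIndepOn_finset_iff]
      intro w hw
      simp only [id] at hw
      refine hA w ?_ hw
      have h5 := congrArg (fun z => inner ℝ f z) hw
      simp only [inner_sum, inner_smul_right, inner_zero_right] at h5
      rw [← h5]
      exact Finset.sum_congr rfl (fun t ht => by rw [hone t (hT t ht), mul_one])
    refine ⟨simplex_zero _ V' v' Y rfl (hval.mono (subset_univ _)) (fun T hTn hTV hTa =>
      (h T (hli T hTV hTa)).1 hTn) F hF hF', ?_⟩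
    refine simplex_zero _ V' v' (fun P => Y (convexHull ℝ (insert 0 P))) rfl
      (hval.join (subset_univ _) convex_univ (mem_univ _)) (fun T hTn hTV hTa => ?_) F hF hF'
    rw [hull_insert_hull]
    exact (h T (hli T hTV hTa)).2

end Simp

end Part3

section Part4


variable {n : ℕ}

lemma matVec_apply (A : Matrix (Fin n) (Fin n) ℝ) (x : En n) (i : Fin n) :
    matVec A x i = ∑ j, A i j * x j := by
  simp [matVec, Matrix.toLpLin_apply, Matrix.mulVec, dotProduct]

lemma matVec_mul (A B : Matrix (Fin n) (Fin n) ℝ) (x : En n) :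
    matVec (A * B) x = matVec A (matVec B x) := by
  simp [matVec, Matrix.toLpLin_apply, Matrix.mulVec_mulVec]

lemma matVec_one (x : En n) : matVec (1 : Matrix (Fin n) (Fin n) ℝ) x = x := by
  ext i; simp [matVec_apply, Matrix.one_apply]

lemma matVec_add (A : Matrix (Fin n) (Fin n) ℝ) (x y : En n) :
    matVec A (x + y) = matVec A x + matVec A y := by simp [matVec]

lemma matVec_image_mul (A B : Matrix (Fin n) (Fin n) ℝ) (S : Set (En n)) :
    matVec (A * B) '' S = matVec A '' (matVec B '' S) := by
  rw [image_image]; exact image_congr fun x _ => matVec_mul A B x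

lemma matVec_image_one (S : Set (En n)) : matVec (1 : Matrix (Fin n) (Fin n) ℝ) '' S = S := by
  rw [image_congr fun x _ => matVec_one x]; simp

lemma matVec_inj {A : Matrix (Fin n) (Fin n) ℝ} (hA : A.det ≠ 0) :
    Function.Injective (matVec A) := by
  intro x y h
  have := congrArg (matVec A⁻¹) h
  rwa [← matVec_mul, ← matVec_mul, Matrix.nonsing_inv_mul _ (isUnit_iff_ne_zero.2 hA),
    matVec_one, matVec_one] at this

lemma matVec_hull (A : Matrix (Fin n) (Fin n) ℝ) (S : Set (En n)) :
    matVec A '' convexHull ℝ S = convexHull ℝ (matVec A '' S) :=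
  LinearMap.image_convexHull (Matrix.toEuclideanLin A) S

lemma IsPolytope.matVec {S : Set (En n)} (h : IsPolytope S) (A : Matrix (Fin n) (Fin n) ℝ) :
    IsPolytope (matVec A '' S) := by
  classical
  obtain ⟨T, hT, rfl⟩ := h
  exact ⟨T.image (_root_.matVec A), hT.image _, by rw [matVec_hull]; simp⟩

/-- diagonal reference matrix of determinant `D` -/
def Md (n : ℕ) (D : ℝ) : Matrix (Fin n) (Fin n) ℝ :=
  Matrix.diagonal fun i => if i.1 = 0 then D else 1

lemma Md_det (hn : 3 ≤ n) (D : ℝ) : (Md n D).det = D := by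
  obtain ⟨k, rfl⟩ : ∃ k, n = k + 1 := ⟨n - 1, by omega⟩
  simp [Md, Fin.prod_univ_succ]

lemma Md_one : Md n 1 = 1 := by simp [Md]

/-- normalized valuation -/
def nf (Y : Set (En n) → En n) (D : ℝ) (S : Set (En n)) : En n :=
  matVec (Md n D)⁻¹ (Y (matVec (Md n D) '' S))

lemma nf_one (Y : Set (En n) → En n) (S : Set (En n)) : nf Y 1 S = Y S := by
  simp [nf, Md_one, matVec_image_one, matVec_one]

lemma nf_cov (hn : 3 ≤ n) {Y : Set (En n) → En n} (hY : IsPolySLCovariant Y) {D : ℝ} (hD : D ≠ 0)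
    {E : Matrix (Fin n) (Fin n) ℝ} (hE : E.det ≠ 0) {S : Set (En n)} (hS : IsPolytope S) :
    nf Y D (matVec E '' S) = matVec E (nf Y (D * E.det) S) := by
  set M := Md n D with hM
  set M' := Md n (D * E.det) with hM'
  have d1 : M.det = D := Md_det hn D
  have d2 : M'.det = D * E.det := Md_det hn _
  have u1 : IsUnit M.det := isUnit_iff_ne_zero.2 (by rw [d1]; exact hD)
  have u2 : IsUnit M'.det := isUnit_iff_ne_zero.2 (by rw [d2]; exact mul_ne_zero hD hE)
  have e1 : (M * E * M'⁻¹) * M' = M * E := by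
    rw [Matrix.mul_assoc, Matrix.nonsing_inv_mul _ u2, Matrix.mul_one]
  have hd : (M * E * M'⁻¹).det = 1 := by
    have := congrArg Matrix.det e1
    rw [Matrix.det_mul, Matrix.det_mul M E, d1, d2] at this
    exact mul_right_cancel₀ (mul_ne_zero hD hE) (by rw [this, one_mul])
  have := hY (matVec M' '' S) (hS.matVec _) _ hd
  rw [← matVec_image_mul, e1, matVec_image_mul] at this
  unfold nf
  rw [← hM, ← hM', this, ← matVec_mul, ← matVec_mul]
  congr 1
  rw [Matrix.mul_assoc, ← Matrix.mul_assoc, Matrix.nonsing_inv_mul _ u1, Matrix.one_mul]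

lemma nf_val (hn : 3 ≤ n) {Y : Set (En n) → En n} (hY : IsPolyValuation Y) {D : ℝ} (hD : D ≠ 0)
    {P Q : Set (En n)} (hP : IsPolytope P) (hQ : IsPolytope Q) (hU : IsPolytope (P ∪ Q))
    (hI : IsPolytope (P ∩ Q)) :
    nf Y D P + nf Y D Q = nf Y D (P ∪ Q) + nf Y D (P ∩ Q) := by
  have hd : (Md n D).det ≠ 0 := by rw [Md_det hn]; exact hD
  have := hY (matVec (Md n D) '' P) (matVec (Md n D) '' Q) (hP.matVec _) (hQ.matVec _)
    (by rw [← image_union]; exact hU.matVec _)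
    (by rw [← image_inter (matVec_inj hd)]; exact hI.matVec _)
  rw [← image_union, ← image_inter (matVec_inj hd)] at this
  unfold nf
  rw [← matVec_add, ← matVec_add, this]

/-- coordinate simplices -/
def Dl (z : Prop) (I : Finset (Fin n)) : Set (En n) :=
  {w | (∀ i, 0 ≤ w i) ∧ (∀ i, i ∉ I → w i = 0) ∧ ∑ i, w i ≤ 1 ∧ (z → 1 ≤ ∑ i, w i)}

def eb (i : Fin n) : En n := EuclideanSpace.single i 1

lemma eb_apply (i j : Fin n) : eb i j = if j = i then (1 : ℝ) else 0 := by
  simp [eb, Pi.single_apply]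

lemma sum_eb (i : Fin n) : ∑ j, eb i j = (1 : ℝ) := by simp [eb_apply]

lemma Dl_convex (z : Prop) (I : Finset (Fin n)) : Convex ℝ (Dl z I) := by
  intro x hx y hy a b ha hb hab
  have hs : ∑ i, (a • x + b • y) i = a * ∑ i, x i + b * ∑ i, y i := by
    simp [Finset.sum_add_distrib, Finset.mul_sum]
  refine ⟨fun i => ?_, fun i hi => ?_, ?_, fun h => ?_⟩
  · have := hx.1 i; have := hy.1 i
    simp only [PiLp.add_apply, PiLp.smul_apply, smul_eq_mul]; positivity
  · simp [hx.2.1 i hi, hy.2.1 i hi]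
  · rw [hs]; nlinarith [hx.2.2.1, hy.2.2.1]
  · rw [hs]; nlinarith [hx.2.2.2 h, hy.2.2.2 h]

lemma sum_eb_smul (w : En n) : ∑ i, w i • eb i = w := by
  ext j
  simp [eb_apply]

lemma Dl_true (I : Finset (Fin n)) : Dl True I = convexHull ℝ (eb '' (I : Set (Fin n))) := by
  apply Subset.antisymm
  · intro w hw
    have h1 : ∑ i ∈ I, w i = 1 := by
      rw [Finset.sum_subset (Finset.subset_univ I) (fun i _ hi => hw.2.1 i hi)]
      exact le_antisymm hw.2.2.1 (hw.2.2.2 trivial)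
    have h2 : ∑ i ∈ I, w i • eb i = w := by
      rw [Finset.sum_subset (Finset.subset_univ I) (fun i _ hi => by rw [hw.2.1 i hi, zero_smul])]
      exact sum_eb_smul w
    rw [← h2]
    exact (convex_convexHull ℝ _).sum_mem (fun i _ => hw.1 i) h1
      (fun i hi => subset_convexHull ℝ _ (mem_image_of_mem _ hi))
  · apply convexHull_min _ (Dl_convex _ _)
    rintro _ ⟨i, hi, rfl⟩
    refine ⟨fun j => ?_, fun j hj => ?_, (sum_eb i).le, fun _ => (sum_eb i).ge⟩
    · rw [eb_apply]; split_ifs <;> norm_num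
    · rw [eb_apply, if_neg]; rintro rfl; exact hj hi

lemma Dl_false (I : Finset (Fin n)) :
    Dl False I = convexHull ℝ (insert 0 (eb '' (I : Set (Fin n)))) := by
  classical
  apply Subset.antisymm
  · intro w hw
    have h2 : ∑ i ∈ I, w i • eb i = w := by
      rw [Finset.sum_subset (Finset.subset_univ I) (fun i _ hi => by rw [hw.2.1 i hi, zero_smul])]
      exact sum_eb_smul w
    have h1 : ∑ i ∈ I, w i ≤ 1 := by
      rw [Finset.sum_subset (Finset.subset_univ I) (fun i _ hi => hw.2.1 i hi)]
      exact hw.2.2.1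
    have h3 : ∑ o ∈ Finset.insertNone I, (o.elim (1 - ∑ i ∈ I, w i) (fun i => w i)) •
        (o.elim (0 : En n) eb) = w := by
      simp [Finset.sum_insertNone, h2]
    rw [← h3]
    refine (convex_convexHull ℝ _).sum_mem (fun o ho => ?_) ?_ (fun o ho => ?_)
    · cases o with
      | none => simpa using h1
      | some i => exact hw.1 i
    · simp [Finset.sum_insertNone]
    · apply subset_convexHull ℝ
      cases o with
      | none => exact mem_insert _ _
      | some i => exact mem_insert_of_mem _ (mem_image_of_mem _ (by simpa using ho))
  · apply convexHull_min _ (Dl_convex _ _)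
    intro x hx
    rcases hx with rfl | ⟨i, hi, rfl⟩
    · refine ⟨fun j => le_rfl, fun j _ => rfl, by simp, fun h => h.elim⟩
    · refine ⟨fun j => ?_, fun j hj => ?_, (sum_eb i).le, fun _ => (sum_eb i).ge⟩
      · rw [eb_apply]; split_ifs <;> norm_num
      · rw [eb_apply, if_neg]; rintro rfl; exact hj hi

lemma Dl_polytope (z : Prop) (I : Finset (Fin n)) (h : z → I.Nonempty) : IsPolytope (Dl z I) := by
  classical
  by_cases hz : z
  · rw [eq_true hz, Dl_true]
    exact ⟨I.image eb, (h hz).image _, by simp⟩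
  · rw [eq_false hz, Dl_false]
    exact ⟨insert 0 (I.image eb), by simp, by simp⟩

/-- identity with column `a` replaced by `p e_a + q e_b` -/
def Gm (a b : Fin n) (p q : ℝ) : Matrix (Fin n) (Fin n) ℝ :=
  (1 : Matrix (Fin n) (Fin n) ℝ).updateCol a (p • Pi.single a 1 + q • Pi.single b 1)

lemma Gm_det {a b : Fin n} (hab : a ≠ b) (p q : ℝ) : (Gm a b p q).det = p := by
  rw [Gm, ← Matrix.cramer_apply, Matrix.cramer_one]
  simp [hab]

lemma Gm_apply (a b : Fin n) (p q : ℝ) (w : En n) :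
    matVec (Gm a b p q) w = w + ((p - 1) * w a) • eb a + (q * w a) • eb b := by
  ext i
  rw [matVec_apply]
  have : ∀ j, Gm a b p q i j * w j = (1 : Matrix (Fin n) (Fin n) ℝ) i j * w j +
      (if j = a then ((p - 1) * (if i = a then 1 else 0) + q * (if i = b then 1 else 0)) * w a
        else 0) := by
    intro j
    by_cases hj : j = a
    · subst hj
      simp only [Gm, Matrix.updateCol_self, Pi.add_apply, Pi.smul_apply, smul_eq_mul,
        Pi.single_apply, Matrix.one_apply, if_true]
      split_ifs <;> ring
    · simp [Gm, Matrix.updateCol_apply, hj]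
  simp only [this, Finset.sum_add_distrib]
  simp [Matrix.one_apply, eb_apply]
  split_ifs <;> ring

lemma Gm_a {a b : Fin n} (hab : a ≠ b) (p q : ℝ) (w : En n) :
    matVec (Gm a b p q) w a = p * w a := by
  rw [Gm_apply]; simp [eb_apply, hab]; ring

lemma Gm_b {a b : Fin n} (hab : a ≠ b) (p q : ℝ) (w : En n) :
    matVec (Gm a b p q) w b = w b + q * w a := by
  rw [Gm_apply]; simp [eb_apply, hab.symm]

lemma Gm_c {a b c : Fin n} (ha : c ≠ a) (hb : c ≠ b) (p q : ℝ) (w : En n) :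
    matVec (Gm a b p q) w c = w c := by
  rw [Gm_apply]; simp [eb_apply, ha, hb]

lemma Gm_sum (a b : Fin n) (p : ℝ) (w : En n) :
    ∑ i, matVec (Gm a b p (1 - p)) w i = ∑ i, w i := by
  rw [Gm_apply]
  simp [Finset.sum_add_distrib, ← Finset.mul_sum, sum_eb]
  ring

lemma Gm_fix {a b : Fin n} (p q : ℝ) (w : En n) (h : w a = 0) :
    matVec (Gm a b p q) w = w := by
  rw [Gm_apply]; simp [h]

lemma Gm_inv {a b : Fin n} (hab : a ≠ b) {p : ℝ} (hp : p ≠ 0) (w : En n) :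
    matVec (Gm a b p (1 - p)) (matVec (Gm a b p⁻¹ (1 - p⁻¹)) w) = w := by
  ext i
  by_cases ha : i = a
  · subst ha; rw [Gm_a hab, Gm_a hab]; field_simp
  by_cases hb : i = b
  · subst hb; rw [Gm_b hab, Gm_b hab, Gm_a hab]; field_simp; ring
  · rw [Gm_c ha hb, Gm_c ha hb]

lemma Gm_image {z : Prop} {I : Finset (Fin n)} {a b : Fin n} (hab : a ≠ b) (ha : a ∈ I) (hb : b ∈ I)
    {p : ℝ} (hp : 0 < p) (hp1 : p < 1) :
    matVec (Gm a b p (1 - p)) '' Dl z I = {w ∈ Dl z I | (1 - p) * w a ≤ p * w b} := by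
  ext w
  constructor
  · rintro ⟨v, hv, rfl⟩
    have h1 := hv.1 a
    have h2 := hv.1 b
    refine ⟨⟨fun i => ?_, fun i hi => ?_, ?_, ?_⟩, ?_⟩
    · by_cases hia : i = a
      · subst hia; rw [Gm_a hab]; positivity
      by_cases hib : i = b
      · subst hib; rw [Gm_b hab]; nlinarith
      · rw [Gm_c hia hib]; exact hv.1 i
    · rw [Gm_c (by rintro rfl; exact hi ha) (by rintro rfl; exact hi hb)]; exact hv.2.1 i hi
    · rw [Gm_sum]; exact hv.2.2.1
    · rw [Gm_sum]; exact hv.2.2.2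
    · rw [Gm_a hab, Gm_b hab]; nlinarith
  · rintro ⟨hv, hle⟩
    refine ⟨_, ⟨fun i => ?_, fun i hi => ?_, ?_, ?_⟩, Gm_inv hab hp.ne' w⟩
    · by_cases hia : i = a
      · subst hia; rw [Gm_a hab]; have := hv.1 i; positivity
      by_cases hib : i = b
      · subst hib; rw [Gm_b hab]
        have : w i + (1 - p⁻¹) * w a = p⁻¹ * (p * w i - (1 - p) * w a) := by field_simp; ring
        rw [this]
        exact mul_nonneg (by positivity) (by linarith)
      · rw [Gm_c hia hib]; exact hv.1 i
    · rw [Gm_c (by rintro rfl; exact hi ha) (by rintro rfl; exact hi hb)]; exact hv.2.1 i hi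
    · rw [Gm_sum]; exact hv.2.2.1
    · rw [Gm_sum]; exact hv.2.2.2

lemma Gm_image_face {z : Prop} {I : Finset (Fin n)} {a b : Fin n} (hab : a ≠ b) (ha : a ∈ I)
    (hb : b ∈ I) {p : ℝ} (hp : 0 < p) (hp1 : p < 1) :
    matVec (Gm a b p (1 - p)) '' Dl z (I.erase b) = {w ∈ Dl z I | (1 - p) * w a = p * w b} := by
  have hsub : Dl z (I.erase b) = {w ∈ Dl z I | w b = 0} := by
    ext w
    constructor
    · intro h
      exact ⟨⟨h.1, fun i hi => h.2.1 i (fun h' => hi (Finset.mem_of_mem_erase h')), h.2.2⟩,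
        h.2.1 b (by simp)⟩
    · rintro ⟨h, h0⟩
      refine ⟨h.1, fun i hi => ?_, h.2.2⟩
      by_cases hib : i = b
      · rw [hib]; exact h0
      · exact h.2.1 i (fun h' => hi (Finset.mem_erase.2 ⟨hib, h'⟩))
  rw [hsub]
  ext w
  constructor
  · rintro ⟨v, ⟨hv, h0⟩, rfl⟩
    have : matVec (Gm a b p (1 - p)) v ∈ matVec (Gm a b p (1 - p)) '' Dl z I := ⟨v, hv, rfl⟩
    rw [Gm_image hab ha hb hp hp1] at this
    refine ⟨this.1, ?_⟩
    rw [Gm_a hab, Gm_b hab, h0]; ring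
  · rintro ⟨hw, he⟩
    have : w ∈ matVec (Gm a b p (1 - p)) '' Dl z I := by
      rw [Gm_image hab ha hb hp hp1]; exact ⟨hw, he.le⟩
    obtain ⟨v, hv, rfl⟩ := this
    refine ⟨v, ⟨hv, ?_⟩, rfl⟩
    rw [Gm_a hab, Gm_b hab] at he
    nlinarith

/-- transposition matrix -/
def Sw (a b : Fin n) : Matrix (Fin n) (Fin n) ℝ := (Equiv.swap a b).toPEquiv.toMatrix

lemma Sw_det {a b : Fin n} (hab : a ≠ b) : (Sw a b).det = -1 := by
  rw [Sw, Matrix.det_permutation, Equiv.Perm.sign_swap hab]; simp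

lemma Sw_apply (a b : Fin n) (w : En n) (i : Fin n) :
    matVec (Sw a b) w i = w (Equiv.swap a b i) := by
  simp [matVec_apply, Sw, PEquiv.toMatrix_apply, Equiv.toPEquiv_apply]

lemma Sw_image {z : Prop} {I : Finset (Fin n)} {a b : Fin n} (ha : a ∈ I) (hb : b ∈ I) :
    matVec (Sw a b) '' Dl z I = Dl z I := by
  have h1 : ∀ w ∈ Dl z I, matVec (Sw a b) w ∈ Dl z I := by
    intro w hw
    have hs : ∑ i, matVec (Sw a b) w i = ∑ i, w i := by
      simp_rw [Sw_apply]; exact Equiv.sum_comp (Equiv.swap a b) (fun i => w i)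
    refine ⟨fun i => ?_, fun i hi => ?_, ?_, ?_⟩
    · rw [Sw_apply]; exact hw.1 _
    · rw [Sw_apply, Equiv.swap_apply_of_ne_of_ne (by rintro rfl; exact hi ha)
        (by rintro rfl; exact hi hb)]; exact hw.2.1 i hi
    · rw [hs]; exact hw.2.2.1
    · rw [hs]; exact hw.2.2.2
  apply Subset.antisymm
  · rintro _ ⟨w, hw, rfl⟩; exact h1 w hw
  · intro w hw
    refine ⟨_, h1 w hw, ?_⟩
    ext i; simp [Sw_apply]

section structure_lemmas
variable {Y : Set (En n) → En n} {z : Prop} {I : Finset (Fin n)}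

lemma nf_fix (hn : 3 ≤ n) (hY : IsPolySLCovariant Y) {D : ℝ} (hD : D ≠ 0)
    {E : Matrix (Fin n) (Fin n) ℝ} (hE : E.det ≠ 0) {S : Set (En n)} (hS : IsPolytope S)
    (h : matVec E '' S = S) :
    nf Y D S = matVec E (nf Y (D * E.det) S) := by
  conv_lhs => rw [← h]
  exact nf_cov hn hY hD hE hS

lemma Gm_fix_Dl {j i : Fin n} (hj : j ∉ I) (p q : ℝ) :
    matVec (Gm j i p q) '' Dl z I = Dl z I := by
  rw [image_congr (fun w hw => Gm_fix p q w (hw.2.1 j hj))]; simp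

lemma exists_ne_fin (hn : 3 ≤ n) (a b : Fin n) : ∃ c : Fin n, c ≠ a ∧ c ≠ b := by
  have : ({a, b} : Finset (Fin n)).card < Fintype.card (Fin n) := by
    have := Finset.card_le_two (a := a) (b := b); simp; omega
  obtain ⟨c, hc⟩ := Finset.exists_mem_notMem_of_card_lt_card (s := {a, b}) (t := Finset.univ)
    (by simpa using this)
  exact ⟨c, by simp at hc; tauto⟩

lemma nf_off (hn : 3 ≤ n) (hY : IsPolySLCovariant Y) {D : ℝ} (hD : D ≠ 0) (hz : z → I.Nonempty)
    {j : Fin n} (hj : j ∉ I) : nf Y D (Dl z I) j = 0 := by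
  obtain ⟨i, hi, -⟩ := exists_ne_fin hn j j
  have h := nf_fix hn hY hD (E := Gm j i 1 1) (by rw [Gm_det hi.symm]; norm_num)
    (Dl_polytope z I hz) (Gm_fix_Dl hj 1 1)
  rw [Gm_det hi.symm, mul_one] at h
  have := congrArg (fun v : En n => v i) h
  simp only [Gm_b hi.symm] at this
  linarith

lemma nf_indep (hn : 3 ≤ n) (hY : IsPolySLCovariant Y) {D D' : ℝ} (hD : D ≠ 0) (hD' : D' ≠ 0)
    (hz : z → I.Nonempty) {j : Fin n} (hj : j ∉ I) :
    nf Y D (Dl z I) = nf Y D' (Dl z I) := by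
  obtain ⟨i, hi, -⟩ := exists_ne_fin hn j j
  have hd : D' / D ≠ 0 := div_ne_zero hD' hD
  have h := nf_fix hn hY hD (E := Gm j i (D' / D) 0) (by rw [Gm_det hi.symm]; exact hd)
    (Dl_polytope z I hz) (Gm_fix_Dl hj _ _)
  rw [Gm_det hi.symm, mul_div_cancel₀ _ hD, Gm_fix _ _ _ (nf_off hn hY hD' hz hj)] at h
  exact h

lemma nf_swap (hn : 3 ≤ n) (hY : IsPolySLCovariant Y) {D : ℝ} (hD : D ≠ 0)
    {a b : Fin n} (hab : a ≠ b) (ha : a ∈ I) (hb : b ∈ I) (i : Fin n) :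
    nf Y D (Dl z I) i = nf Y (-D) (Dl z I) (Equiv.swap a b i) := by
  have h := nf_fix hn hY hD (E := Sw a b) (by rw [Sw_det hab]; norm_num)
    (Dl_polytope z I fun _ => ⟨a, ha⟩) (Sw_image ha hb)
  rw [Sw_det hab, mul_neg_one] at h
  rw [h, Sw_apply]

lemma nf_const (hn : 3 ≤ n) (hY : IsPolySLCovariant Y) {D : ℝ} (hD : D ≠ 0)
    {a b : Fin n} (ha : a ∈ I) (hb : b ∈ I) :
    nf Y D (Dl z I) a = nf Y D (Dl z I) b := by
  by_cases hab : a = b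
  · rw [hab]
  by_cases hI : ∃ j, j ∉ I
  · obtain ⟨j, hj⟩ := hI
    rw [nf_swap hn hY hD hab ha hb a, Equiv.swap_apply_left,
      nf_indep hn hY hD (neg_ne_zero.2 hD) (fun _ => ⟨a, ha⟩) hj]
  · push Not at hI
    obtain ⟨c, hca, hcb⟩ := exists_ne_fin hn a b
    rw [nf_swap hn hY hD hca.symm ha (hI c) a, Equiv.swap_apply_left,
      nf_swap hn hY hD hcb.symm hb (hI c) b, Equiv.swap_apply_left]

lemma nf_neg (hn : 3 ≤ n) (hY : IsPolySLCovariant Y) {D : ℝ} (hD : D ≠ 0) (c : Fin n) :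
    nf Y (-D) (Dl z Finset.univ) c = nf Y D (Dl z Finset.univ) c := by
  obtain ⟨a, ha, -⟩ := exists_ne_fin hn c c
  obtain ⟨b, hb, hb'⟩ := exists_ne_fin hn a c
  rw [nf_swap hn hY hD hb.symm (Finset.mem_univ a) (Finset.mem_univ b) c,
    Equiv.swap_apply_of_ne_of_ne ha.symm hb'.symm]

/-- the splitting equation -/
lemma nf_split (hn : 3 ≤ n) (hY : IsPolySLCovariant Y) (hV : IsPolyValuation Y) {D : ℝ}
    (hD : D ≠ 0) {a b : Fin n} (hab : a ≠ b) (ha : a ∈ I) (hb : b ∈ I) {l : ℝ} (h0 : 0 < l)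
    (h1 : l < 1) :
    matVec (Gm a b l (1 - l)) (nf Y (D * l) (Dl z I)) +
      matVec (Gm b a (1 - l) l) (nf Y (D * (1 - l)) (Dl z I)) =
    nf Y D (Dl z I) + matVec (Gm b a (1 - l) l) (nf Y (D * (1 - l)) (Dl z (I.erase a))) := by
  have hl : 1 - (1 - l) = l := by ring
  have hp := Dl_polytope z I fun _ => ⟨a, ha⟩
  have hp' := Dl_polytope z (I.erase a) fun _ => ⟨b, Finset.mem_erase.2 ⟨hab.symm, hb⟩⟩
  have i1 := Gm_image (z := z) hab ha hb h0 h1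
  have i2 := Gm_image (z := z) hab.symm hb ha (p := 1 - l) (by linarith) (by linarith)
  have i3 := Gm_image_face (z := z) hab.symm hb ha (p := 1 - l) (by linarith) (by linarith)
  rw [hl] at i2 i3
  have hU : matVec (Gm a b l (1 - l)) '' Dl z I ∪ matVec (Gm b a (1 - l) l) '' Dl z I = Dl z I := by
    rw [i1, i2]
    ext w
    constructor
    · rintro (h | h) <;> exact h.1
    · intro h
      rcases le_total ((1 - l) * w a) (l * w b) with h' | h'
      · exact Or.inl ⟨h, h'⟩
      · exact Or.inr ⟨h, h'⟩
  have hI : matVec (Gm a b l (1 - l)) '' Dl z I ∩ matVec (Gm b a (1 - l) l) '' Dl z I =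
      matVec (Gm b a (1 - l) l) '' Dl z (I.erase a) := by
    rw [i1, i2, i3]
    ext w
    constructor
    · rintro ⟨h, h'⟩; exact ⟨h.1, le_antisymm h'.2 h.2⟩
    · rintro ⟨h, h'⟩; exact ⟨⟨h, h'.ge⟩, ⟨h, h'.le⟩⟩
  have hv := nf_val hn hV hD (hp.matVec (Gm a b l (1 - l))) (hp.matVec (Gm b a (1 - l) l))
    (by rw [hU]; exact hp) (by rw [hI]; exact hp'.matVec _)
  have d1 := Gm_det hab l (1 - l)
  have d2 := Gm_det hab.symm (1 - l) l
  rw [hU, hI, nf_cov hn hY hD (by rw [d1]; exact h0.ne') hp,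
    nf_cov hn hY hD (by rw [d2]; linarith) hp,
    nf_cov hn hY hD (by rw [d2]; linarith) hp', d1, d2] at hv
  exact hv

/-- homogeneity and vanishing on faces for `|I| ≥ 3` -/
lemma nf_three (hn : 3 ≤ n) (hY : IsPolySLCovariant Y) (hV : IsPolyValuation Y) {D : ℝ}
    (hD : D ≠ 0) {a b c : Fin n} (hab : a ≠ b) (hca : c ≠ a) (hcb : c ≠ b) (ha : a ∈ I) (hb : b ∈ I)
    (hc : c ∈ I) {l : ℝ} (h0 : 0 < l) (h1 : l < 1) :
    nf Y (D * (1 - l)) (Dl z I) c = (1 - l) * nf Y D (Dl z I) c ∧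
      nf Y (D * (1 - l)) (Dl z (I.erase a)) c = 0 := by
  have hs := nf_split (z := z) hn hY hV hD hab ha hb h0 h1
  have hDl : D * l ≠ 0 := mul_ne_zero hD h0.ne'
  have hDl' : D * (1 - l) ≠ 0 := mul_ne_zero hD (by linarith)
  have hb' : b ∈ I.erase a := Finset.mem_erase.2 ⟨hab.symm, hb⟩
  have hc' : c ∈ I.erase a := Finset.mem_erase.2 ⟨hca, hc⟩
  have ea := congrArg (fun v : En n => v a) hs
  have eb := congrArg (fun v : En n => v b) hs
  have ec := congrArg (fun v : En n => v c) hs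
  simp only [PiLp.add_apply, Gm_a hab, Gm_b hab, Gm_a hab.symm, Gm_b hab.symm, Gm_c hca hcb,
    Gm_c hcb hca, nf_const hn hY hDl ha hc, nf_const hn hY hDl hb hc, nf_const hn hY hDl' ha hc,
    nf_const hn hY hDl' hb hc, nf_const hn hY hD ha hc, nf_const hn hY hD hb hc,
    nf_const hn hY hDl' hb' hc',
    nf_off hn hY hDl' (fun _ => ⟨b, hb'⟩) (Finset.notMem_erase a I)] at ea eb ec
  generalize nf Y (D * l) (Dl z I) c = g1 at *
  generalize nf Y (D * (1 - l)) (Dl z I) c = g2 at *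
  generalize nf Y D (Dl z I) c = g at *
  generalize nf Y (D * (1 - l)) (Dl z (I.erase a)) c = h at *
  have e2 : g2 = (1 - l) * g := by linear_combination ea - l * ec
  have e1 : g1 = l * g := by linear_combination eb - (1 - l) * ec
  exact ⟨e2, by linear_combination ec.symm + e1 + e2⟩

lemma nf_face_zero (hn : 3 ≤ n) (hY : IsPolySLCovariant Y) (hV : IsPolyValuation Y) {D : ℝ}
    (hD : D ≠ 0) (hz : z → I.Nonempty) (hI : I ≠ Finset.univ) : nf Y D (Dl z I) = 0 := by
  have hD2 : (2 * D) ≠ 0 := by simpa using hD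
  have hl : 2 * D * (1 - 1 / 2) = D := by ring
  -- the case of at least two elements
  have key : ∀ (J : Finset (Fin n)) (c b : Fin n), c ∈ J → b ∈ J → c ≠ b → J ≠ Finset.univ →
      ∀ D : ℝ, D ≠ 0 → nf Y D (Dl z J) c = 0 := by
    intro J c b hc hb hcb hJ D hD
    have hD2 : (2 * D) ≠ 0 := by simpa using hD
    have hl : 2 * D * (1 - 1 / 2) = D := by ring
    obtain ⟨a, ha⟩ : ∃ a, a ∉ J := by
      by_contra h
      push Not at h
      exact hJ (Finset.eq_univ_iff_forall.2 h)
    have h := (nf_three (z := z) (I := insert a J) hn hY hV hD2 (a := a) (b := b) (c := c)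
      (by rintro rfl; exact ha hb) (by rintro rfl; exact ha hc) hcb (by simp) (by simp [hb])
      (by simp [hc]) (l := 1 / 2) (by norm_num) (by norm_num)).2
    rwa [hl, Finset.erase_insert ha] at h
  ext c
  by_cases hc : c ∈ I
  swap
  · exact nf_off hn hY hD hz hc
  by_cases h2 : ∃ b ∈ I, c ≠ b
  · obtain ⟨b, hb, hcb⟩ := h2
    exact key I c b hc hb hcb hI D hD
  push Not at h2
  have hIc : I = {c} := Finset.eq_singleton_iff_unique_mem.2 ⟨hc, fun x hx => (h2 x hx).symm⟩
  obtain ⟨a, hac, -⟩ := exists_ne_fin hn c c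
  obtain ⟨b, hba, hbc⟩ := exists_ne_fin hn a c
  have hJ : ({a, c} : Finset (Fin n)) ≠ Finset.univ := by
    intro h
    have := Finset.mem_univ b
    rw [← h] at this
    simp [hba, hbc] at this
  have he : ({a, c} : Finset (Fin n)).erase a = I := by
    rw [hIc, Finset.erase_insert]; simpa using hac
  have hs := nf_split (z := z) (I := {a, c}) hn hY hV hD2 hac (by simp) (by simp)
    (l := 1 / 2) (by norm_num) (by norm_num)
  rw [he] at hs
  have hs' := congrArg (fun v : En n => v c) hs
  have k1 : ∀ D : ℝ, D ≠ 0 → nf Y D (Dl z {a, c}) c = 0 :=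
    key _ c a (by simp) (by simp) hac.symm hJ
  have k2 : ∀ D : ℝ, D ≠ 0 → nf Y D (Dl z {a, c}) a = 0 :=
    key _ a c (by simp) (by simp) hac hJ
  have n1 : 2 * D * (1 / 2) ≠ 0 := by simpa using hD
  simp only [PiLp.add_apply, Gm_b hac, Gm_a hac.symm] at hs'
  rw [hl, k1 _ n1, k2 _ n1, k1 _ hD, k1 _ hD2] at hs'
  change _ = (0 : ℝ)
  linarith

lemma nf_univ (hn : 3 ≤ n) (hY : IsPolySLCovariant Y) (hV : IsPolyValuation Y) (z : Prop) :
    ∃ g : ℝ, ∀ D : ℝ, D ≠ 0 → ∀ i, nf Y D (Dl z Finset.univ) i = g * |D| := by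
  let c : Fin n := ⟨0, by omega⟩
  obtain ⟨a, hac, -⟩ := exists_ne_fin hn c c
  obtain ⟨b, hba, hbc⟩ := exists_ne_fin hn a c
  have hom : ∀ D : ℝ, D ≠ 0 → ∀ t : ℝ, 0 < t → t < 1 →
      nf Y (D * t) (Dl z Finset.univ) c = t * nf Y D (Dl z Finset.univ) c := by
    intro D hD t h0 h1
    have h := (nf_three (z := z) (I := Finset.univ) hn hY hV hD hba.symm hac.symm hbc.symm
      (Finset.mem_univ _) (Finset.mem_univ _) (Finset.mem_univ _) (l := 1 - t) (by linarith)
      (by linarith)).1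
    rwa [sub_sub_cancel] at h
  refine ⟨nf Y 1 (Dl z Finset.univ) c, ?_⟩
  have pos : ∀ D : ℝ, 0 < D →
      nf Y D (Dl z Finset.univ) c = nf Y 1 (Dl z Finset.univ) c * D := by
    intro D hD
    rcases lt_trichotomy D 1 with h | h | h
    · have := hom 1 one_ne_zero D hD h
      rw [one_mul] at this
      rw [this, mul_comm]
    · rw [h, mul_one]
    · have := hom D hD.ne' D⁻¹ (by positivity) (inv_lt_one_of_one_lt₀ h)
      rw [mul_inv_cancel₀ hD.ne'] at this
      rw [this]; field_simp
  intro D hD i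
  rw [nf_const hn hY hD (Finset.mem_univ i) (Finset.mem_univ c)]
  rcases lt_or_gt_of_ne hD with h | h
  · rw [abs_of_neg h, ← pos (-D) (by linarith), nf_neg hn hY hD]
  · rw [abs_of_pos h, pos D h]

/-- all-ones vector -/
def onesV (n : ℕ) : En n := ∑ i, eb i

lemma onesV_apply (i : Fin n) : onesV n i = 1 := by
  simp [onesV, eb_apply]

theorem structure_thm (hn : 3 ≤ n) (hY : IsPolySLCovariant Y) (hV : IsPolyValuation Y) (z : Prop) :
    ∃ g : ℝ, ∀ X : Matrix (Fin n) (Fin n) ℝ, X.det ≠ 0 →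
      Y (matVec X '' Dl z Finset.univ) = (g * |X.det|) • matVec X (onesV n) ∧
      ∀ I : Finset (Fin n), (z → I.Nonempty) → I ≠ Finset.univ → Y (matVec X '' Dl z I) = 0 := by
  obtain ⟨g, hg⟩ := nf_univ hn hY hV z
  refine ⟨g, fun X hX => ⟨?_, fun I hz hI => ?_⟩⟩
  · rw [← nf_one Y, nf_cov hn hY one_ne_zero hX (Dl_polytope _ _ fun _ => ⟨⟨0, by omega⟩, by simp⟩),
      one_mul]
    have : nf Y X.det (Dl z Finset.univ) = (g * |X.det|) • onesV n := by
      ext i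
      simp [hg _ hX i, onesV_apply]
    rw [this]; simp [matVec]
  · rw [← nf_one Y, nf_cov hn hY one_ne_zero hX (Dl_polytope _ _ hz), one_mul,
      nf_face_zero hn hY hV hX hz hI]
    simp [matVec]

end structure_lemmas

end Part4

section Part5


variable {n : ℕ}

/-- the operator `m([0,Q])` -/
def mom0 (Q : Set (En n)) : En n := momentSet (convexHull ℝ (Q ∪ {0}))

lemma mom0_eq (Q : Set (En n)) : mom0 Q = momentSet (convexHull ℝ (insert 0 Q)) := by
  rw [mom0, union_singleton]

lemma IsPolytope.integrableOn {Q : Set (En n)} (h : IsPolytope Q) :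
    IntegrableOn (fun x : En n => x) Q :=
  continuous_id.continuousOn.integrableOn_compact h.isCompact

lemma IsPolytope.measurableSet {Q : Set (En n)} (h : IsPolytope Q) : MeasurableSet Q :=
  h.isCompact.isClosed.measurableSet

lemma moment_val : IsPolyValuation (momentSet (n := n)) := by
  intro P Q hP hQ hU hI
  have hd : momentSet (P ∪ Q) = momentSet P + momentSet (Q \ P) := by
    unfold momentSet
    rw [← union_sdiff_self, setIntegral_union disjoint_sdiff_right
      (hQ.measurableSet.diff hP.measurableSet) hP.integrableOn
      (hQ.integrableOn.mono_set sdiff_subset)]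
  have hd2 : momentSet Q = momentSet (P ∩ Q) + momentSet (Q \ P) := by
    unfold momentSet
    rw [inter_comm, integral_inter_add_sdiff hP.measurableSet hQ.integrableOn]
  rw [hd, hd2]; abel

lemma moment_matVec {X : Matrix (Fin n) (Fin n) ℝ} (hX : X.det ≠ 0) {Q : Set (En n)}
    (hQ : IsPolytope Q) : momentSet (matVec X '' Q) = |X.det| • matVec X (momentSet Q) := by
  let L : En n →L[ℝ] En n := LinearMap.toContinuousLinearMap (Matrix.toEuclideanLin X)
  have hL : ∀ x, matVec X x = L x := fun x => rfl
  have hdet : L.det = X.det := by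
    change LinearMap.det (Matrix.toEuclideanLin X) = X.det
    simp [Matrix.toEuclideanLin]
  unfold momentSet
  rw [integral_image_eq_integral_abs_det_fderiv_smul volume hQ.measurableSet
    (f := matVec X) (f' := fun _ => L) (fun x _ => L.hasFDerivWithinAt)
    (matVec_inj hX).injOn]
  rw [integral_smul, hdet]
  congr 1
  exact L.integral_comp_comm hQ.integrableOn

lemma moment_cov : IsPolySLCovariant (momentSet (n := n)) := by
  intro Q hQ X hX
  rw [moment_matVec (by rw [hX]; exact one_ne_zero) hQ, hX]; simp

lemma mom0_val : IsPolyValuation (mom0 (n := n)) := by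
  intro P Q hP hQ hU hI
  simp only [mom0_eq]
  rw [join_union hP hQ hU 0, join_inter hP hQ hU hI 0]
  refine moment_val _ _ (hP.hull_insert 0) (hQ.hull_insert 0) ?_ ?_
  · rw [← join_union hP hQ hU 0]; exact hU.hull_insert 0
  · rw [← join_inter hP hQ hU hI 0]; exact hI.hull_insert 0

lemma mom0_cov : IsPolySLCovariant (mom0 (n := n)) := by
  intro Q hQ X hX
  rw [mom0_eq, mom0_eq, ← moment_cov _ (hQ.hull_insert 0) X hX, matVec_hull, image_insert_eq]
  simp [matVec]

lemma moment_Dl_true (hn : 3 ≤ n) : momentSet (Dl True (Finset.univ : Finset (Fin n))) = 0 := by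
  let c : Fin n := ⟨0, by omega⟩
  let φ : En n →ₗ[ℝ] ℝ :=
    { toFun := fun x => ∑ i, x i
      map_add' := by intro x y; simp [Finset.sum_add_distrib]
      map_smul' := by intro x y; simp [Finset.mul_sum] }
  have hne : LinearMap.ker φ ≠ ⊤ := by
    intro h
    have : eb c ∈ LinearMap.ker φ := by rw [h]; trivial
    have h2 : ∑ i, eb c i = (0 : ℝ) := this
    rw [sum_eb] at h2
    norm_num at h2
  have h0 : volume ((fun x => x + (- eb c)) ⁻¹' (LinearMap.ker φ : Set (En n))) = 0 := by
    rw [measure_preimage_add_right]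
    exact Measure.addHaar_submodule _ _ hne
  refine setIntegral_measure_zero _ (measure_mono_null ?_ h0)
  intro w hw
  change φ (w + - eb c) = 0
  rw [map_add, map_neg]
  have h1 : φ w = 1 := le_antisymm hw.2.2.1 (hw.2.2.2 trivial)
  have h2 : φ (eb c) = 1 := sum_eb c
  rw [h1, h2]; norm_num

lemma mom0_Dl (z : Prop) : mom0 (Dl z (Finset.univ : Finset (Fin n))) =
    momentSet (Dl False (Finset.univ : Finset (Fin n))) := by
  rw [mom0_eq]
  by_cases hz : z
  · rw [eq_true hz, Dl_true, hull_insert_hull, Dl_false]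
  · rw [eq_false hz, Dl_false, hull_insert_hull]; simp

lemma moment_Dl_false (hn : 3 ≤ n) :
    ∃ g : ℝ, g ≠ 0 ∧ momentSet (Dl False (Finset.univ : Finset (Fin n))) = g • onesV n := by
  obtain ⟨g, hg⟩ := structure_thm hn (moment_cov (n := n)) moment_val False
  have h1 := (hg 1 (by simp)).1
  rw [matVec_image_one, matVec_one] at h1
  simp only [Matrix.det_one, abs_one, mul_one] at h1
  refine ⟨g, ?_, h1⟩
  rintro rfl
  rw [zero_smul] at h1
  let c : Fin n := ⟨0, by omega⟩
  have hp := Dl_polytope False (Finset.univ : Finset (Fin n)) (fun h => h.elim)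
  have h2 : ∫ x in Dl False (Finset.univ : Finset (Fin n)), x c = 0 := by
    have := (EuclideanSpace.proj c : En n →L[ℝ] ℝ).integral_comp_comm
      hp.integrableOn
    have h3 : ∫ x in Dl False (Finset.univ : Finset (Fin n)), x = 0 := h1
    rw [h3, map_zero] at this
    exact this
  have hint : IntegrableOn (fun x : En n => x c) (Dl False Finset.univ) :=
    (EuclideanSpace.proj c : En n →L[ℝ] ℝ).integrable_comp hp.integrableOn
  have hpos := (setIntegral_pos_iff_support_of_nonneg_ae
    ((ae_restrict_iff' hp.measurableSet).2 (Eventually.of_forall fun x hx => hx.1 c)) hint).2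
  rw [h2] at hpos
  refine absurd (hpos ?_) (lt_irrefl _)
  have hsub : {x : En n | (∀ i, 0 < x i) ∧ ∑ i, x i < 1} ⊆
      (Function.support fun x : En n => x c) ∩ Dl False Finset.univ := by
    intro x hx
    exact ⟨(hx.1 c).ne', fun i => (hx.1 i).le, fun i hi => absurd (Finset.mem_univ i) hi, hx.2.le,
      fun h => h.elim⟩
  refine lt_of_lt_of_le ?_ (measure_mono hsub)
  apply IsOpen.measure_pos
  · have e : {x : En n | (∀ i, 0 < x i) ∧ ∑ i, x i < 1} =
        (⋂ i, {x : En n | 0 < x i}) ∩ {x : En n | ∑ i, x i < 1} := by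
      ext x; simp
    rw [e]
    exact (isOpen_iInter_of_finite fun i => isOpen_lt continuous_const (by fun_prop)).inter
      (isOpen_lt (by fun_prop) continuous_const)
  · refine ⟨((n : ℝ) + 1)⁻¹ • onesV n, fun i => ?_, ?_⟩
    · simp only [PiLp.smul_apply, onesV_apply, smul_eq_mul]; positivity
    · simp only [PiLp.smul_apply, onesV_apply, smul_eq_mul, Finset.sum_const, Finset.card_univ,
        Fintype.card_fin, nsmul_eq_mul, mul_one]
      rw [← div_eq_mul_inv, div_lt_one (by positivity)]; linarith

instance : MeasurableSpace (PolySp n) := borel _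
instance : BorelSpace (PolySp n) := ⟨rfl⟩

lemma cont_infDist_aux1 : Continuous fun p : En n × NonemptyCompacts (En n) =>
    Metric.infDist p.1 (p.2 : Set (En n)) := by
  have := (Metric.lipschitz_infDist (α := En n)).continuous
  exact this

lemma cont_infDist_aux2 : Continuous fun p : PolySp n × En n =>
    ((p.2, p.1.1) : En n × NonemptyCompacts (En n)) :=
  continuous_snd.prodMk (continuous_subtype_val.comp continuous_fst)

lemma cont_infDist :
    Continuous fun p : PolySp n × En n => Metric.infDist p.2 (p.1.1 : Set (En n)) := by
  have := cont_infDist_aux1.comp (cont_infDist_aux2 (n := n))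
  simpa only [Function.comp_def] using this

lemma meas_of_set {S : PolySp n → Set (En n)} {F : Set (PolySp n × En n)} (hF : MeasurableSet F)
    (h : ∀ K x, x ≠ 0 → (x ∈ S K ↔ (K, x) ∈ F)) (hS : ∀ K, MeasurableSet (S K)) :
    Measurable fun K : PolySp n => momentSet (S K) := by
  have h1 : ∀ K, momentSet (S K) = ∫ x, F.indicator (fun p : PolySp n × En n => p.2) (K, x) := by
    intro K
    unfold momentSet
    rw [← integral_indicator (hS K)]
    congr 1
    ext1 x
    by_cases hx : x = 0
    · subst hx; simp [indicator]
    · by_cases hm : x ∈ S K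
      · rw [indicator_of_mem hm, indicator_of_mem ((h K x hx).1 hm)]
      · rw [indicator_of_notMem hm, indicator_of_notMem (fun h' => hm ((h K x hx).2 h'))]
  simp only [h1]
  have : StronglyMeasurable (F.indicator (fun p : PolySp n × En n => p.2)) :=
    (measurable_snd.indicator hF).stronglyMeasurable
  exact (this.integral_prod_right').measurable

lemma mem_iff_infDist (K : PolySp n) (x : En n) :
    x ∈ (K.1 : Set (En n)) ↔ Metric.infDist x (K.1 : Set (En n)) = 0 :=
  K.1.isCompact.isClosed.mem_iff_infDist_zero K.1.nonempty

lemma moment_meas : Measurable fun K : PolySp n => momentSet (K.1 : Set (En n)) := by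
  have hF : IsClosed {p : PolySp n × En n | Metric.infDist p.2 (p.1.1 : Set (En n)) = 0} :=
    isClosed_eq cont_infDist continuous_const
  exact meas_of_set hF.measurableSet (fun K x _ => mem_iff_infDist K x)
    (fun K => K.1.isCompact.isClosed.measurableSet)

lemma mom0_meas : Measurable fun K : PolySp n => mom0 (K.1 : Set (En n)) := by
  let F : ℕ → Set (PolySp n × En n) := fun N =>
    Prod.snd '' {q : Icc (1 : ℝ) N × (PolySp n × En n) |
      Metric.infDist (q.1.1 • q.2.2) (q.2.1.1 : Set (En n)) = 0}
  have hF : ∀ N, IsClosed (F N) := by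
    intro N
    refine isClosedMap_snd_of_compactSpace _ (isClosed_eq ?_ continuous_const)
    have : Continuous fun q : Icc (1 : ℝ) N × (PolySp n × En n) =>
        ((q.2.1, q.1.1 • q.2.2) : PolySp n × En n) := by fun_prop
    have h2 := cont_infDist.comp this
    simpa only [Function.comp_def] using h2
  have hm : MeasurableSet (⋃ N, F N) := MeasurableSet.iUnion fun N => (hF N).measurableSet
  simp only [mom0_eq]
  refine meas_of_set hm (fun K x hx => ?_)
    (fun K => (K.2.hull_insert 0).measurableSet)
  rw [mem_hull_insert K.2.convex K.2.nonempty, mem_iUnion]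
  constructor
  · rintro ⟨y, hy, t, h0, h1, hxy⟩
    simp only [sub_zero, zero_add] at hxy
    have ht : 0 < t := by
      rcases h0.lt_or_eq with h | h
      · exact h
      · rw [← h, zero_smul] at hxy; exact absurd hxy hx
    obtain ⟨N, hN⟩ := exists_nat_ge t⁻¹
    refine ⟨N, (⟨t⁻¹, (one_le_inv₀ ht).2 h1, hN⟩, (K, x)), ?_, rfl⟩
    change Metric.infDist (t⁻¹ • x) (K.1 : Set (En n)) = 0
    rw [← mem_iff_infDist, hxy, inv_smul_smul₀ ht.ne']
    exact hy
  · rintro ⟨N, ⟨⟨s, hs⟩, ⟨K', x'⟩⟩, hq, heq⟩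
    simp only [Prod.mk.injEq] at heq
    obtain ⟨rfl, rfl⟩ := heq
    have h : Metric.infDist (s • x') (K'.1 : Set (En n)) = 0 := hq
    rw [← mem_iff_infDist] at h
    have hs0 : 0 < s := lt_of_lt_of_le one_pos hs.1
    refine ⟨_, h, s⁻¹, by positivity, inv_le_one_of_one_le₀ hs.1, ?_⟩
    simp [inv_smul_smul₀ hs0.ne']

end Part5

section Part6


variable {n : ℕ}

lemma val_comb {Y : Set (En n) → En n} (hY : IsPolyValuation Y) (a b c : ℝ) :
    IsPolyValuation fun Q => a • Y Q + (b • momentSet Q + c • mom0 Q) := by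
  intro P Q hP hQ hU hI
  have h1 := congrArg (a • ·) (hY P Q hP hQ hU hI)
  have h2 := congrArg (b • ·) (moment_val P Q hP hQ hU hI)
  have h3 := congrArg (c • ·) (mom0_val P Q hP hQ hU hI)
  simp only [smul_add] at h1 h2 h3
  calc _ = (a • Y P + a • Y Q) + ((b • momentSet P + b • momentSet Q) +
        (c • mom0 P + c • mom0 Q)) := by simp only []; abel
    _ = _ := by rw [h1, h2, h3]; simp only []; abel

lemma cov_comb {Y : Set (En n) → En n} (hY : IsPolySLCovariant Y) (a b c : ℝ) :
    IsPolySLCovariant fun Q => a • Y Q + (b • momentSet Q + c • mom0 Q) := by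
  intro Q hQ X hX
  simp only [hY Q hQ X hX, moment_cov Q hQ X hX, mom0_cov Q hQ X hX]
  simp [matVec]

lemma exists_matrix (T : Finset (En n)) (hT : LinearIndepOn ℝ id (T : Set (En n))) :
    ∃ (X : Matrix (Fin n) (Fin n) ℝ) (I : Finset (Fin n)), X.det ≠ 0 ∧
      matVec X '' (eb '' (I : Set (Fin n))) = T := by
  classical
  let b := Module.Basis.extend hT
  have : Fintype (hT.extend (subset_univ _)) := FiniteDimensional.fintypeBasisIndex b
  have hcard : Fintype.card (hT.extend (subset_univ (T : Set (En n)))) = Fintype.card (Fin n) := by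
    rw [← Module.finrank_eq_card_basis b]; simp
  let e := Fintype.equivOfCardEq hcard
  let b' := b.reindex e
  let X : Matrix (Fin n) (Fin n) ℝ := Matrix.of fun i j => b' j i
  have hX : ∀ j, matVec X (eb j) = b' j := by
    intro j; ext i; simp [matVec_apply, eb_apply, X]
  refine ⟨X, Finset.univ.filter fun j => b' j ∈ T, ?_, ?_⟩
  · have hinj : Function.Injective (Matrix.toEuclideanLin X) := by
      rw [← LinearMap.ker_eq_bot, LinearMap.ker_eq_bot']
      intro x hx
      have h1 : ∑ j, x j • b' j = 0 := by
        rw [← hx]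
        conv_rhs => rw [← sum_eb_smul x, map_sum]
        refine Finset.sum_congr rfl fun j _ => ?_
        rw [map_smul]
        congr 1
        exact (hX j).symm
      have := Fintype.linearIndependent_iff.1 b'.linearIndependent _ h1
      ext j; exact this j
    have hd : LinearMap.det (Matrix.toEuclideanLin X) = X.det := by simp [Matrix.toEuclideanLin]
    rw [← hd]
    have hu := LinearEquiv.isUnit_det' (LinearEquiv.ofInjectiveEndo _ hinj)
    exact hu.ne_zero
  · rw [image_image]
    ext v
    constructor
    · rintro ⟨j, hj, rfl⟩
      change matVec X (eb j) ∈ (T : Set (En n))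
      rw [hX]
      simpa using hj
    · intro hv
      have hv' : v ∈ hT.extend (subset_univ (T : Set (En n))) := hT.subset_extend _ hv
      have hb : b' (e ⟨v, hv'⟩) = v := by simp [b', b]
      refine ⟨e ⟨v, hv'⟩, ?_, (hX _).trans hb⟩
      simp only [Finset.coe_filter, Finset.mem_univ, true_and]
      change b' (e ⟨v, hv'⟩) ∈ T
      rw [hb]; exact hv

lemma Dl_vanish (hn : 3 ≤ n) {Y : Set (En n) → En n} (hY : IsPolySLCovariant Y)
    (hV : IsPolyValuation Y) (z : Prop) (h : Y (Dl z Finset.univ) = 0)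
    {X : Matrix (Fin n) (Fin n) ℝ} (hX : X.det ≠ 0) (I : Finset (Fin n)) (hz : z → I.Nonempty) :
    Y (matVec X '' Dl z I) = 0 := by
  obtain ⟨g, hg⟩ := structure_thm hn hY hV z
  have h1 := (hg 1 (by simp)).1
  rw [matVec_image_one, matVec_one, h] at h1
  simp only [Matrix.det_one, abs_one, mul_one] at h1
  have hg0 : g = 0 := by
    have := congrArg (fun v : En n => v ⟨0, by omega⟩) h1
    simp [onesV_apply] at this
    exact this.symm
  by_cases hI : I = Finset.univ
  · rw [hI, (hg X hX).1, hg0]; simp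
  · exact (hg X hX).2 I hz hI

lemma final_zero (hn : 3 ≤ n) {Y : Set (En n) → En n} (hY : IsPolySLCovariant Y)
    (hV : IsPolyValuation Y) (h : ∀ z, Y (Dl z Finset.univ) = 0) :
    ∀ P, IsPolytope P → Y P = 0 := by
  apply thmB Y (fun P Q hP hQ _ _ hU hI => hV P Q hP hQ hU hI)
  intro T hT
  obtain ⟨X, I, hX, hI⟩ := exists_matrix T hT
  constructor
  · intro hne
    have hIne : I.Nonempty := by
      rw [Finset.nonempty_iff_ne_empty]
      rintro rfl
      simp at hI
      exact hne.ne_empty (by exact_mod_cast hI.symm)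
    rw [← hI, ← matVec_hull, ← Dl_true]
    exact Dl_vanish hn hY hV True (h True) hX I (fun _ => hIne)
  · have h0 : matVec X 0 = 0 := by simp [matVec]
    have : insert (0 : En n) (T : Set (En n)) = matVec X '' (insert 0 (eb '' (I : Set (Fin n)))) := by
      rw [image_insert_eq, hI, h0]
    rw [this, ← matVec_hull, ← Dl_false]
    exact Dl_vanish hn hY hV False (h False) hX I (fun h => h.elim)

theorem main_forward (hn : 3 ≤ n) (Y : Set (En n) → En n) (hV : IsPolyValuation Y)
    (hY : IsPolySLCovariant Y) : ∃ c₁ c₂ : ℝ, ∀ Q : Set (En n), IsPolytope Q →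
      Y Q = c₁ • momentSet Q + c₂ • momentSet (convexHull ℝ (Q ∪ {0})) := by
  obtain ⟨g0, hg0, hm⟩ := moment_Dl_false hn
  have key : ∀ z, ∃ g : ℝ, Y (Dl z Finset.univ) = g • onesV n := by
    intro z
    obtain ⟨g, hg⟩ := structure_thm hn hY hV z
    have h1 := (hg 1 (by simp)).1
    rw [matVec_image_one, matVec_one] at h1
    simp only [Matrix.det_one, abs_one, mul_one] at h1
    exact ⟨g, h1⟩
  obtain ⟨gT, hT⟩ := key True
  obtain ⟨gF, hF⟩ := key False
  refine ⟨gF / g0 - gT / g0, gT / g0, fun Q hQ => ?_⟩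
  have := final_zero hn (cov_comb hY 1 (-(gF / g0 - gT / g0)) (-(gT / g0)))
    (val_comb hV 1 (-(gF / g0 - gT / g0)) (-(gT / g0))) ?_ Q hQ
  · simp only [one_smul, neg_smul] at this
    rw [← neg_add, ← sub_eq_add_neg, sub_eq_zero] at this
    exact this
  · intro z
    by_cases hz : z
    · rw [eq_true hz]
      simp only [hT, moment_Dl_true hn, mom0_Dl, hm, smul_zero, zero_add, smul_smul,
        ← add_smul]
      rw [show 1 * gT + -(gT / g0) * g0 = 0 by field_simp; ring, zero_smul]
    · rw [eq_false hz]
      simp only [hF, mom0_Dl, hm, smul_smul, ← add_smul]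
      rw [show 1 * gF + (-(gF / g0 - gT / g0) * g0 + -(gT / g0) * g0) = 0 by field_simp; ring,
        zero_smul]

theorem main_backward (Y : Set (En n) → En n) (c₁ c₂ : ℝ)
    (h : ∀ Q : Set (En n), IsPolytope Q →
      Y Q = c₁ • momentSet Q + c₂ • momentSet (convexHull ℝ (Q ∪ {0}))) :
    @Measurable (PolySp n) (En n) (borel (PolySp n)) _
        (fun K : PolySp n => Y (K.1 : Set (En n))) ∧
      IsPolyValuation Y ∧ IsPolySLCovariant Y := by
  have h' : ∀ Q : Set (En n), IsPolytope Q →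
      Y Q = (0 : ℝ) • (fun _ : Set (En n) => (0 : En n)) Q + (c₁ • momentSet Q + c₂ • mom0 Q) := by
    intro Q hQ; rw [h Q hQ]; simp [mom0]
  refine ⟨?_, ?_, ?_⟩
  · have : (fun K : PolySp n => Y (K.1 : Set (En n))) =
        fun K : PolySp n => c₁ • momentSet (K.1 : Set (En n)) + c₂ • mom0 (K.1 : Set (En n)) := by
      ext1 K; exact h _ K.2
    rw [this]
    exact (moment_meas.const_smul c₁).add (mom0_meas.const_smul c₂)
  · intro P Q hP hQ hU hI
    rw [h' P hP, h' Q hQ, h' _ hU, h' _ hI]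
    exact val_comb (Y := fun _ => 0) (fun _ _ _ _ _ _ => rfl) 0 c₁ c₂ P Q hP hQ hU hI
  · intro Q hQ X hX
    rw [h' Q hQ, h' _ (hQ.matVec X)]
    exact cov_comb (Y := fun _ => 0) (fun _ _ _ _ => by simp [matVec]) 0 c₁ c₂ Q hQ X hX

end Part6

/-- For `n ≥ 3`, an operator `Y : 𝒫ⁿ → ℝⁿ` is a Borel measurable
(w.r.t. the Hausdorff metric topology) and `SL(n)` covariant valuation if and only if
there exist constants `c₁, c₂ ∈ ℝ` with `Y Q = c₁ m(Q) + c₂ m([0,Q])` for all `Q ∈ 𝒫ⁿ`. -/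
theorem statement0 (n : ℕ) (hn : 3 ≤ n) (Y : Set (En n) → En n) :
    (@Measurable (PolySp n) (En n) (borel (PolySp n)) _
        (fun K : PolySp n => Y (K.1 : Set (En n))) ∧
      IsPolyValuation Y ∧ IsPolySLCovariant Y) ↔
    ∃ c₁ c₂ : ℝ, ∀ Q : Set (En n), IsPolytope Q →
      Y Q = c₁ • momentSet Q + c₂ • momentSet (convexHull ℝ (Q ∪ {0})) := by
  constructor
  · rintro ⟨-, hV, hY⟩
    exact main_forward hn Y hV hY
  · rintro ⟨c₁, c₂, h⟩
    exact main_backward Y c₁ c₂ h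

end
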